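/- arXiv:math/0605104 — 8 statements merged into one kernel-verified Lean document; each statement's English description precedes it below -/
import Mathlib

section
/- Let {a,b,c,d} = Σ and let q be an n-quasigroup of order 4 (n ≥ 3). If there exist more than two n-quasigroups f satisfying f(x̄) = q(x̄) for every x̄ ∈ Σ^n whose last coordinate lies in {a,b}, then q is semilinear or decomposable. -/
/-- The alphabet `Σ = {0,1,2,3}`. -/
abbrev V4 := Fin 4

/-- An `n`-quasigroup of order 4. -/
def IsNQuasigroup {n : ℕ} (f : (Fin n → V4) → V4) : Prop :=
  ∀ (a : Fin n → V4) (i : Fin n) (b : V4),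
    ∃! x : V4, f (Function.update a i x) = b

/-- `S_{a,b}(f)`. -/
def SCode {n : ℕ} (f : (Fin n → V4) → V4) (a b : V4) : Set (Fin n → V4) :=
  {x | f x = a ∨ f x = b}

/-- A linear double-code. -/
def IsLinearDoubleCode {n : ℕ} (S : Set (Fin n → V4)) : Prop :=
  ∃ T : Fin n → Finset V4, (∀ i, (T i).card = 2) ∧
    ∀ x : Fin n → V4, x ∈ S ↔ (∑ i, if x i ∈ T i then (1 : ZMod 2) else 0) = 1

/-- A semilinear `n`-quasigroup. -/
def IsSemilinear {n : ℕ} (f : (Fin n → V4) → V4) : Prop :=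
  ∃ a b : V4, a ≠ b ∧ IsLinearDoubleCode (SCode f a b)

/-- A decomposable `n`-quasigroup:
`f(x₁,…,xₙ) = h(g(x_{σ(1)},…,x_{σ(m)}), x_{σ(m+1)},…,x_{σ(n)})` for some
`2 ≤ m < n`, an `(n−m+1)`-quasigroup `h`, an `m`-quasigroup `g` and a
permutation `σ`. -/
def IsDecomposable {n : ℕ} (f : (Fin n → V4) → V4) : Prop :=
  ∃ (m : ℕ) (_ : 2 ≤ m) (hm : m < n)
    (h : (Fin (n - m + 1) → V4) → V4) (g : (Fin m → V4) → V4)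
    (σ : Equiv.Perm (Fin n)),
    IsNQuasigroup h ∧ IsNQuasigroup g ∧
    ∀ x : Fin n → V4,
      f x = h (Fin.cons (g fun j => x (σ ⟨j.1, j.2.trans hm⟩))
        (fun j : Fin (n - m) => x (σ ⟨m + j.1, by have := j.2; omega⟩)))

section Generic
open Function

theorem mte_bal1 : ∀ f g : V4 → Bool, (Finset.univ.filter (fun c => f c = true)).card = 2 →
    (Finset.univ.filter (fun c => g c = true)).card = 2 → ∀ e, f e = g e →
    ∃ c, f c = g c ∧ f c ≠ f e := by decide

theorem mte_bal2 : ∀ f : V4 → Bool, (Finset.univ.filter (fun c => f c = true)).card = 2 →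
    ∀ e, ∃ c, c ≠ e ∧ f c = f e := by decide

theorem mte_bal3 : ∀ f : V4 → Bool, (Finset.univ.filter (fun c => f c = true)).card = 2 →
    ∀ a a' c, a ≠ a' → c ≠ a → c ≠ a' → f a = f a' → f c ≠ f a := by decide

variable {ι : Type*} [DecidableEq ι]

def MBal (F : (ι → V4) → Bool) : Prop :=
  ∀ x i, (Finset.univ.filter (fun c => F (update x i c) = true)).card = 2

def MAdj (F : (ι → V4) → Bool) (x y : ι → V4) : Prop :=
  F x = F y ∧ ∃ i c, y = update x i c

def MR (F : (ι → V4) → Bool) : (ι → V4) → (ι → V4) → Prop :=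
  Relation.ReflTransGen (MAdj F)

theorem MAdj.symm' {F : (ι → V4) → Bool} {x y : ι → V4} (h : MAdj F x y) : MAdj F y x := by
  obtain ⟨h1, i, c, rfl⟩ := h
  exact ⟨h1.symm, i, x i, by simp⟩

theorem MR.symm' {F : (ι → V4) → Bool} {x y : ι → V4} (h : MR F x y) : MR F y x := by
  induction h with
  | refl => exact Relation.ReflTransGen.refl
  | tail _ h ih => exact Relation.ReflTransGen.head h.symm' ih

theorem MR.lev {F : (ι → V4) → Bool} {x y : ι → V4} (h : MR F x y) : F x = F y := by
  induction h with
  | refl => rfl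
  | tail _ h ih => exact ih.trans h.1

theorem MR.line {F : (ι → V4) → Bool} {x : ι → V4} {i : ι} {a b : V4}
    (h : F (update x i a) = F (update x i b)) : MR F (update x i a) (update x i b) :=
  Relation.ReflTransGen.single ⟨h, i, b, by simp⟩

theorem mte_transport {F : (ι → V4) → Bool} (hF : MBal F) {x y : ι → V4} (h : MR F x y) :
    ∀ (i : ι) (a a' : V4), F (update x i a) = F (update y i a') → F (update x i a) ≠ F x →
      MR F (update x i a) (update y i a') := by
  induction h with
  | refl => intro i a a' h1 _; exact MR.line h1
  | @tail y z hxy hyz ih =>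
    intro i a a' h1 h2
    have hl : F x = F y := MR.lev hxy
    obtain ⟨h3, k, e, rfl⟩ := hyz
    by_cases hk : i = k
    · subst hk
      simp only [update_idem] at h1 ⊢
      exact ih i a a' h1 h2
    · obtain ⟨c, hc1, hc2⟩ := mte_bal1 _ _ (hF y i) (hF (update y k e) i) (y i) (by
        have : update (update y k e) i (y i) = update y k e := by
          have : y i = update y k e i := by rw [update_of_ne hk]
          rw [this, update_eq_self]
        rw [this, update_eq_self]; exact h3)
      rw [update_eq_self] at hc2
      have h4 : F (update x i a) = F (update y i c) := by
        rw [hl] at h2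
        revert h2 hc2; cases F (update x i a) <;> cases F (update y i c) <;> cases F y <;> simp
      refine (ih i a c h4 h2).trans (Relation.ReflTransGen.trans ?_ (MR.line (x := update y k e) (i := i)
        (a := c) (b := a') ?_))
      · exact Relation.ReflTransGen.single ⟨hc1, k, e, by rw [update_comm hk]⟩
      · rw [← hc1, ← h4, h1]

/-- point of the plane -/
def MP (x : ι → V4) (i j : ι) (a b : V4) : ι → V4 := update (update x i a) j b

theorem MP_swap (x : ι → V4) {i j : ι} (h : i ≠ j) (a b : V4) : MP x i j a b = MP x j i b a := by
  unfold MP; rw [update_comm h]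

def MSplit (F : (ι → V4) → Bool) (x : ι → V4) (i j : ι) : Prop :=
  ∃ a a' b b', F (MP x i j a b) = F (MP x i j a' b') ∧ ¬ MR F (MP x i j a b) (MP x i j a' b')

def MGood (F : (ι → V4) → Bool) (i j : ι) : Prop :=
  ∀ x a a' b b', (F (MP x i j a b) ^^ F (MP x i j a b')) =
    (F (MP x i j a' b) ^^ F (MP x i j a' b'))

theorem MR.row {F : (ι → V4) → Bool} {x : ι → V4} {i j : ι} {a b b' : V4}
    (h : F (MP x i j a b) = F (MP x i j a b')) : MR F (MP x i j a b) (MP x i j a b') :=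
  MR.line h

theorem MR.col {F : (ι → V4) → Bool} {x : ι → V4} {i j : ι} (hij : i ≠ j) {a a' b : V4}
    (h : F (MP x i j a b) = F (MP x i j a' b)) : MR F (MP x i j a b) (MP x i j a' b) := by
  rw [MP_swap x hij, MP_swap x hij] at *
  exact MR.line h

theorem MR.trans' {F : (ι → V4) → Bool} {x y z : ι → V4} (h : MR F x y) (h' : MR F y z) :
    MR F x z := Relation.ReflTransGen.trans h h'

/-- corner structure -/
def MCor (F : (ι → V4) → Bool) (x : ι → V4) (i j : ι) (a a' b b' : V4) : Prop :=
  F (MP x i j a b) = F (MP x i j a' b') ∧ F (MP x i j a b') = F (MP x i j a' b) ∧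
  F (MP x i j a b) ≠ F (MP x i j a b') ∧
  ¬ MR F (MP x i j a b) (MP x i j a' b') ∧ ¬ MR F (MP x i j a b') (MP x i j a' b)

theorem mte_cor {F : (ι → V4) → Bool} (hF : MBal F) {x : ι → V4} {i j : ι} (hij : i ≠ j)
    {a a' b b' : V4} (h : F (MP x i j a b) = F (MP x i j a' b'))
    (h' : ¬ MR F (MP x i j a b) (MP x i j a' b')) : MCor F x i j a a' b b' := by
  have h1 : F (MP x i j a b) ≠ F (MP x i j a b') := fun e =>
    h' ((MR.row e).trans' (MR.col hij (e.symm.trans h)))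
  have h2 : F (MP x i j a b) ≠ F (MP x i j a' b) := fun e =>
    h' ((MR.col hij e).trans' (MR.row (e.symm.trans h)))
  have h3 : F (MP x i j a b') = F (MP x i j a' b) := by
    revert h1 h2
    cases F (MP x i j a b) <;> cases F (MP x i j a b') <;> cases F (MP x i j a' b) <;> simp
  refine ⟨h, h3, h1, h', fun e => h' ?_⟩
  have := mte_transport hF e j b b' (by simpa [MP] using h) (by simpa [MP] using h1)
  simpa [MP] using this

theorem MCor.swapi {F : (ι → V4) → Bool} {x : ι → V4} {i j : ι}
    {a a' b b' : V4} (h : MCor F x i j a a' b b') : MCor F x i j a' a b b' := by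
  obtain ⟨h1, h2, h3, h4, h5⟩ := h
  exact ⟨h2.symm, h1.symm, by rw [← h2, ← h1]; exact h3.symm, fun e => h5 e.symm', fun e => h4 e.symm'⟩

theorem MCor.swapj {F : (ι → V4) → Bool} {x : ι → V4} {i j : ι}
    {a a' b b' : V4} (h : MCor F x i j a a' b b') : MCor F x i j a a' b' b := by
  obtain ⟨h1, h2, h3, h4, h5⟩ := h
  exact ⟨h2, h1, h3.symm, h5, h4⟩

theorem MCor.transp {F : (ι → V4) → Bool} {x : ι → V4} {i j : ι} (hij : i ≠ j)
    {a a' b b' : V4} (h : MCor F x i j a a' b b') : MCor F x j i b b' a a' := by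
  obtain ⟨h1, h2, h3, h4, h5⟩ := h
  simp only [MCor, ← MP_swap x hij]
  exact ⟨h1, h2.symm, h2 ▸ h3, h4, fun e => h5 e.symm'⟩

theorem bool_ne_ne {a b c : Bool} (h : a ≠ b) (h' : a ≠ c) : b = c := by
  revert h h'; cases a <;> cases b <;> cases c <;> simp

theorem MCor.good0 {F : (ι → V4) → Bool} {x : ι → V4} {i j : ι} (hij : i ≠ j)
    {a a' b b' : V4} (h : MCor F x i j a a' b b') (r : V4) :
    F (MP x i j r b) ≠ F (MP x i j r b') := by
  obtain ⟨h1, h2, h3, h4, h5⟩ := h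
  intro e
  by_cases hr : F (MP x i j r b) = F (MP x i j a b)
  · exact h4 ((MR.col hij hr.symm).trans' ((MR.row e).trans' (MR.col hij (by rw [← e, hr, h1]))))
  · have e1 : F (MP x i j r b) = F (MP x i j a b') := bool_ne_ne (Ne.symm hr) h3
    exact h5 ((MR.col hij (e1.symm.trans e)).trans' ((MR.row e.symm).trans'
      (MR.col hij (e1.trans h2))))

theorem MCor.good1 {F : (ι → V4) → Bool} {x : ι → V4} {i j : ι} (hij : i ≠ j)
    {a a' b b' : V4} (h : MCor F x i j a a' b b') (r s : V4)
    (hr : F (MP x i j r b) = F (MP x i j a b)) (hs : F (MP x i j a s) = F (MP x i j a b)) :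
    F (MP x i j r s) = F (MP x i j a b) := by
  by_contra hn
  have g1 := h.good0 hij r
  have g2 := (h.transp hij).good0 hij.symm s
  simp only [← MP_swap x hij] at g2
  obtain ⟨h1, h2, h3, h4, h5⟩ := h
  rw [hr] at g1
  rw [hs] at g2
  have e1 := bool_ne_ne g1 (Ne.symm hn)
  have e2 := bool_ne_ne g2 (Ne.symm hn)
  have e3 := bool_ne_ne g1 h3
  have e4 := bool_ne_ne g2 (h2 ▸ h3)
  exact h5 ((MR.col hij e3.symm).trans' ((MR.row e1).trans' ((MR.col hij e2.symm).trans'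
    (MR.row e4))))

theorem MCor.good2 {F : (ι → V4) → Bool} {x : ι → V4} {i j : ι} (hij : i ≠ j)
    {a a' b b' : V4} (h : MCor F x i j a a' b b') (r s : V4) :
    (F (MP x i j r s) ^^ F (MP x i j a b)) = (F (MP x i j r b) ^^ F (MP x i j a s)) := by
  have g1 := h.good1 hij r s
  have g2 := h.swapi.good1 hij r s
  have g3 := h.swapj.good1 hij r s
  have g4 := h.swapi.swapj.good1 hij r s
  have k1 := h.good0 hij r
  have k2 := (h.transp hij).good0 hij.symm s
  simp only [← MP_swap x hij] at k2
  obtain ⟨h1, h2, h3, -, -⟩ := h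
  revert g1 g2 g3 g4 k1 k2 h1 h2 h3
  generalize F (MP x i j r s) = v1
  generalize F (MP x i j a b) = v2
  generalize F (MP x i j r b) = v3
  generalize F (MP x i j a s) = v4
  generalize F (MP x i j a' b) = v5
  generalize F (MP x i j a b') = v6
  generalize F (MP x i j a' b') = v7
  generalize F (MP x i j a' s) = v8
  generalize F (MP x i j r b') = v9
  intro g1 g2 g3 g4 k1 k2 h1 h2 h3
  have q1 := (Bool.eq_not_iff).2 k1.symm
  have q2 := (Bool.eq_not_iff).2 k2.symm
  have q3 := (Bool.eq_not_iff).2 h3.symm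
  subst q1 q2 h1 h2 q3
  revert v1 v2 v3 v4
  decide

theorem MCor.good {F : (ι → V4) → Bool} {x : ι → V4} {i j : ι} (hij : i ≠ j)
    {a a' b b' : V4} (h : MCor F x i j a a' b b') (r r' s s' : V4) :
    (F (MP x i j r s) ^^ F (MP x i j r s')) = (F (MP x i j r' s) ^^ F (MP x i j r' s')) := by
  have h1 := h.good2 hij r s
  have h2 := h.good2 hij r s'
  have h3 := h.good2 hij r' s
  have h4 := h.good2 hij r' s'
  revert h1 h2 h3 h4
  generalize F (MP x i j r s) = v1
  generalize F (MP x i j a b) = v2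
  generalize F (MP x i j r b) = v3
  generalize F (MP x i j a s) = v4
  generalize F (MP x i j r' b) = v5
  generalize F (MP x i j a s') = v6
  generalize F (MP x i j r' s') = v7
  generalize F (MP x i j r' s) = v8
  generalize F (MP x i j r s') = v9
  revert v1 v2 v3 v4 v5 v6 v7 v8 v9
  decide

theorem MP_upd (x : ι → V4) {i j k : ι} (hi : k ≠ i) (hj : k ≠ j) (a b t : V4) :
    MP (update x k t) i j a b = update (MP x i j a b) k t := by
  unfold MP; rw [update_comm hi, update_comm hj]

/-- If both or none of two opposite corners flip, the plane stays split. -/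
theorem mte_flip {F : (ι → V4) → Bool} (hF : MBal F) {p p' : ι → V4} {k : ι} {t : V4}
    (h1 : F p = F p') (h2 : ¬ MR F p p')
    (h3 : F (update p k t) = F (update p' k t)) :
    ¬ MR F (update p k t) (update p' k t) := by
  intro e
  apply h2
  by_cases h : F (update p k t) = F p
  · have l1 : MR F p (update p k t) := by
      have := MR.line (F := F) (x := p) (i := k) (a := p k) (b := t) (by simpa using h.symm)
      simpa using this
    have l2 : MR F (update p' k t) p' := by
      have := MR.line (F := F) (x := p') (i := k) (a := t) (b := p' k)
        (by rw [update_eq_self, ← h1, ← h3, h])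
      simpa using this
    exact l1.trans' (e.trans' l2)
  · have := mte_transport hF e k (p k) (p' k) (by simpa using h1) (by simpa using Ne.symm h)
    simpa using this

/-- half of the moving lemma -/
theorem mte_move_half {F : (ι → V4) → Bool} (hF : MBal F) {x : ι → V4} {i j k : ι}
    (hij : i ≠ j) (hi : k ≠ i) (hj : k ≠ j) (t : V4)
    {a a' b b' : V4} (h : MCor F x i j a a' b b')
    (hc : F (MP (update x k t) i j a b) = F (MP (update x k t) i j a' b))
    (ho : F (MP (update x k t) i j a b) ≠ F (MP (update x k t) i j a' b')) :
    MSplit F (update x k t) i j := by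
  have b2 := mte_bal2 _ (hF (update x j b) i) a
  obtain ⟨c, hca, hc1⟩ := b2
  have key : ∀ y a, update (update y j b) i a = MP y i j a b := fun y a => by
    rw [MP_swap y hij]; rfl
  rw [key, key] at hc1
  obtain ⟨h1, h2, h3, h4, h5⟩ := h
  have hca' : c ≠ a' := by
    rintro rfl; exact h3 (hc1.symm.trans h2.symm)
  have haa' : a ≠ a' := by
    rintro rfl; exact h3 h2.symm
  have := mte_bal3 _ (hF (update (update x k t) j b) i) a a' c haa' hca hca' (by
    rw [key, key]; exact hc)
  rw [key, key] at this
  have e := bool_ne_ne (Ne.symm this) ho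
  refine ⟨c, a', b, b', e, ?_⟩
  rw [MP_upd x hi hj, MP_upd x hi hj] at e ⊢
  refine mte_flip hF (hc1.trans h1) (fun e' => h4 ((MR.col hij hc1.symm).trans' e')) e

theorem mte_move {F : (ι → V4) → Bool} (hF : MBal F) {x : ι → V4} {i j : ι}
    (hij : i ≠ j) (h : MSplit F x i j) (k : ι) (t : V4) : MSplit F (update x k t) i j := by
  by_cases hi : k = i
  · subst hi
    simpa [MSplit, MP] using h
  by_cases hj : k = j
  · subst hj
    have : ∀ a b, MP (update x k t) i k a b = MP x i k a b := fun a b => by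
      rw [MP_swap _ hij, MP_swap _ hij]; simp [MP]
    simpa [MSplit, this] using h
  obtain ⟨a, a', b, b', h1, h2⟩ := h
  have hc := mte_cor hF hij h1 h2
  by_cases e1 : F (MP (update x k t) i j a b) = F (MP (update x k t) i j a' b')
  · refine ⟨a, a', b, b', e1, ?_⟩
    rw [MP_upd x hi hj, MP_upd x hi hj] at e1 ⊢
    exact mte_flip hF h1 h2 e1
  by_cases e3 : F (MP (update x k t) i j a b) = F (MP (update x k t) i j a' b)
  · exact mte_move_half hF hij hi hj t hc e3 e1
  by_cases e2 : F (MP (update x k t) i j a b') = F (MP (update x k t) i j a' b)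
  · refine ⟨a, a', b', b, e2, ?_⟩
    rw [MP_upd x hi hj, MP_upd x hi hj] at e2 ⊢
    exact mte_flip hF hc.2.1 hc.2.2.2.2 e2
  have e4 : F (MP (update x k t) i j a b) = F (MP (update x k t) i j a b') := by
    by_contra e4; exact e2 (bool_ne_ne e4 e3)
  obtain ⟨c, c', s, s', g1, g2⟩ := mte_move_half hF hij.symm hj hi t (hc.transp hij)
    (by rw [← MP_swap _ hij, ← MP_swap _ hij]; exact e4)
    (by rw [← MP_swap _ hij, ← MP_swap _ hij]; exact e1)
  refine ⟨s, s', c, c', ?_⟩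
  rw [MP_swap _ hij, MP_swap _ hij]
  exact ⟨g1, g2⟩

theorem mte_const_on {P : (ι → V4) → Prop} (s : Finset ι)
    (h : ∀ x, ∀ k ∈ s, ∀ c, P x → P (update x k c)) (x y : ι → V4) (hx : P x) :
    P (s.piecewise y x) := by
  classical
  induction s using Finset.induction_on with
  | empty => simpa using hx
  | insert k s hk ih =>
    rw [Finset.piecewise_insert]
    exact h _ k (by simp) _ (ih fun x k hk c hx => h x k (by simp [hk]) c hx)

theorem mte_const [Fintype ι] {P : (ι → V4) → Prop}
    (h : ∀ x k c, P x → P (update x k c)) (x y : ι → V4) (hx : P x) : P y := by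
  have := mte_const_on Finset.univ (fun x k _ c => h x k c) x y hx
  simpa using this

theorem mte_good_of_split [Fintype ι] {F : (ι → V4) → Bool} (hF : MBal F) {x : ι → V4} {i j : ι}
    (hij : i ≠ j) (h : MSplit F x i j) : MGood F i j := by
  intro y r r' s s'
  obtain ⟨a, a', b, b', h1, h2⟩ :=
    mte_const (P := fun x => MSplit F x i j) (fun x k c h => mte_move hF hij h k c) x y h
  exact (mte_cor hF hij h1 h2).good hij r r' s s'

def MBad (F : (ι → V4) → Bool) (i j : ι) : Prop := i ≠ j ∧ ¬ MGood F i j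

theorem mte_conn [Fintype ι] {F : (ι → V4) → Bool} (hF : MBal F)
    (h : ∀ i j, Relation.ReflTransGen (MBad F) i j) (x y : ι → V4) (hxy : F x = F y) :
    MR F x y := by
  rcases isEmpty_or_nonempty ι with he | ⟨⟨i0⟩⟩
  · rw [Subsingleton.elim x y]; exact Relation.ReflTransGen.refl
  set G : ι → (ι → V4) → Prop := fun i z => ∀ c, F (update z i c) = F x → MR F x (update z i c)
    with hG
  have hex : ∀ z i, ∃ c, F (update z i c) = F x := by
    intro z i
    obtain ⟨c, hc, hc'⟩ := mte_bal1 _ _ (hF z i) (hF z i) (z i) rfl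
    by_cases e : F (update z i (z i)) = F x
    · exact ⟨_, e⟩
    · exact ⟨c, bool_ne_ne (Ne.symm hc') e⟩
  have h1 : ∀ i j, MBad F i j → ∀ z, G i z → G j z := by
    intro i j hb z hi c hc
    by_contra hn
    apply hb.2
    obtain ⟨e, he⟩ := hex z i
    refine mte_good_of_split hF (x := z) hb.1 ⟨e, z i, z j, c, ?_, ?_⟩
    · rw [MP_swap z hb.1]; simp [MP, he, hc]
    · rw [MP_swap z hb.1]
      simp only [MP, update_eq_self]
      exact fun e' => hn ((hi e he).trans' e')
  have h2 : ∀ i j z, G i z → G j z := by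
    intro i j z hi
    induction h i j with
    | refl => exact hi
    | tail _ hb ih => exact h1 _ _ hb z ih
  have h3 : G i0 y := by
    refine mte_const (P := G i0) (fun z k c hz => ?_) x y ?_
    · refine h2 k i0 _ ?_
      have := h2 i0 k _ hz
      simpa [hG] using this
    · intro c hc
      have := MR.line (F := F) (x := x) (i := i0) (a := x i0) (b := c) (by simpa using hc.symm)
      simpa using this
  have := h3 (y i0) (by simpa using hxy.symm)
  simpa using this

end Generic

section Generic2
open Function

variable {ι : Type*} [DecidableEq ι]

theorem MBad.symm' {F : (ι → V4) → Bool} {i j : ι} (h : MBad F i j) : MBad F j i := by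
  refine ⟨h.1.symm, fun hg => h.2 ?_⟩
  intro x a a' b b'
  have := hg x b b' a a'
  simp only [MP_swap x h.1.symm] at this
  revert this
  generalize F (MP x i j a b) = v1
  generalize F (MP x i j a' b) = v2
  generalize F (MP x i j a b') = v3
  generalize F (MP x i j a' b') = v4
  revert v1 v2 v3 v4; decide

theorem mte_rtg_symm {F : (ι → V4) → Bool} {i j : ι} (h : Relation.ReflTransGen (MBad F) i j) :
    Relation.ReflTransGen (MBad F) j i := by
  induction h with
  | refl => exact Relation.ReflTransGen.refl
  | tail _ h ih => exact Relation.ReflTransGen.head h.symm' ih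

theorem mte_split [Fintype ι] {F : (ι → V4) → Bool} (I : Finset ι)
    (hg : ∀ i ∈ I, ∀ j ∉ I, MGood F i j) (y y' z z' : ι → V4) :
    (F (I.piecewise y z) ^^ F (I.piecewise y z')) =
      (F (I.piecewise y' z) ^^ F (I.piecewise y' z')) := by
  have c1 : ∀ i ∈ I, ∀ c c' (x w : ι → V4), (F (update x i c) ^^ F (update x i c')) =
      (F (update (Iᶜ.piecewise w x) i c) ^^ F (update (Iᶜ.piecewise w x) i c')) := by
    intro i hi c c' x w
    refine mte_const_on (P := fun u => (F (update x i c) ^^ F (update x i c')) =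
      (F (update u i c) ^^ F (update u i c'))) Iᶜ ?_ x w rfl
    intro u k hk e hu
    have hk' : k ∉ I := by simpa using hk
    have hik : i ≠ k := by rintro rfl; exact hk' hi
    rw [hu]
    have := hg i hi k hk' u c c' (u k) e
    have e1 : ∀ c, MP u i k c (u k) = update u i c := by
      intro c; rw [MP_swap u hik]; simp [MP]
    have e2 : ∀ c, MP u i k c e = update (update u k e) i c := by
      intro c; rw [MP_swap u hik]; rfl
    rw [e1, e1, e2, e2] at this
    revert this
    generalize F (update u i c) = v1
    generalize F (update u i c') = v2
    generalize F (update (update u k e) i c) = v3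
    generalize F (update (update u k e) i c') = v4
    revert v1 v2 v3 v4; decide
  have c2 := mte_const_on (P := fun u => (F (I.piecewise y z) ^^ F (I.piecewise y z')) =
      (F u ^^ F (Iᶜ.piecewise z' u))) I ?_ (I.piecewise y z) y' ?_
  · have e1 : I.piecewise y' (I.piecewise y z) = I.piecewise y' z := by
      ext k; by_cases hk : k ∈ I <;> simp [hk]
    have e2 : Iᶜ.piecewise z' (I.piecewise y' z) = I.piecewise y' z' := by
      ext k; by_cases hk : k ∈ I <;> simp [hk]
    rwa [e1, e2] at c2
  · intro u k hk c hu
    rw [hu]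
    have := c1 k hk (u k) c u z'
    have e1 : update (Iᶜ.piecewise z' u) k (u k) = Iᶜ.piecewise z' u := by
      ext l; by_cases hl : l = k
      · subst hl; simp [hk]
      · simp [hl]
    have e2 : update (Iᶜ.piecewise z' u) k c = Iᶜ.piecewise z' (update u k c) := by
      ext l; by_cases hl : l = k
      · subst hl; simp [hk]
      · by_cases hl' : l ∈ I <;> simp [hl, hl']
    rw [e1, e2, update_eq_self] at this
    revert this
    generalize F u = v1
    generalize F (update u k c) = v2
    generalize F (Iᶜ.piecewise z' u) = v3
    generalize F (Iᶜ.piecewise z' (update u k c)) = v4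
    revert v1 v2 v3 v4; decide
  · have e2 : Iᶜ.piecewise z' (I.piecewise y z) = I.piecewise y z' := by
      ext k; by_cases hk : k ∈ I <;> simp [hk]
    rw [e2]

def mglue (I : Finset ι) (y : I → V4) (z : ι → V4) : ι → V4 :=
  fun k => if h : k ∈ I then y ⟨k, h⟩ else z k

theorem mglue_update (I : Finset ι) (y : I → V4) (z : ι → V4) (i : I) (c : V4) :
    mglue I (update y i c) z = update (mglue I y z) i c := by
  ext k
  by_cases hk : k ∈ I
  · by_cases hi : k = i
    · subst hi; simp [mglue]
    · have : (⟨k, hk⟩ : I) ≠ i := fun e => hi (congrArg Subtype.val e)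
      simp [mglue, hk, update_of_ne hi, update_of_ne this]
  · have hi : k ≠ i := by rintro rfl; exact hk i.2
    simp [mglue, hk, update_of_ne hi]

theorem mglue_res (I : Finset ι) (y z : ι → V4) :
    mglue I (fun i => y i) z = I.piecewise y z := by
  ext k; by_cases hk : k ∈ I <;> simp [mglue, hk]

theorem mte_sub_conn [Fintype ι] {F : (ι → V4) → Bool} (hF : MBal F) (I : Finset ι) 
    (hI : ∀ i ∈ I, ∀ j, MBad F i j → j ∈ I)
    (hI' : ∀ i ∈ I, ∀ j ∈ I, Relation.ReflTransGen (MBad F) i j) (z : ι → V4)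
    (y y' : I → V4) (h : F (mglue I y z) = F (mglue I y' z)) :
    MR (fun y => F (mglue I y z)) y y' := by
  have hg : ∀ i ∈ I, ∀ j ∉ I, MGood F i j := by
    intro i hi j hj
    by_contra hn
    exact hj (hI i hi j ⟨by rintro rfl; exact hj hi, hn⟩)
  have hb : ∀ i (hi : i ∈ I) j (hj : j ∈ I), MBad F i j →
      MBad (fun y : I → V4 => F (mglue I y z)) ⟨i, hi⟩ ⟨j, hj⟩ := by
    intro i hi j hj hb
    refine ⟨fun e => hb.1 (congrArg Subtype.val e), fun hG => hb.2 ?_⟩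
    intro x a a' b b'
    have h1 := hG (fun i => x i) a a' b b'
    simp only [MP, mglue_update, mglue_res] at h1
    have key : ∀ a b w, I.piecewise (MP x i j a b) w = MP (I.piecewise x w) i j a b := by
      intro a b w; ext k
      unfold MP
      by_cases hk : k = j
      · subst hk; simp [hj]
      by_cases hk' : k = i
      · subst hk'; simp [hk, hi]
      by_cases hkI : k ∈ I <;> simp [hk, hk', hkI]
    have key2 : ∀ a b, I.piecewise (MP x i j a b) x = MP x i j a b := by
      intro a b; rw [key, Finset.piecewise_same]
    have s := fun a b => mte_split I hg (MP x i j a b) z x z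
    simp only [key2, key] at s
    simp only [MP] at s ⊢
    have s1 := s a b
    have s2 := s a b'
    have s3 := s a' b
    have s4 := s a' b'
    revert h1 s1 s2 s3 s4
    generalize (F (I.piecewise z x) ^^ F (I.piecewise z z)) = v0
    generalize F (update (update (I.piecewise x z) i a) j b) = v1
    generalize F (update (update (I.piecewise x z) i a) j b') = v2
    generalize F (update (update (I.piecewise x z) i a') j b) = v3
    generalize F (update (update (I.piecewise x z) i a') j b') = v4
    generalize F (update (update x i a) j b) = w1
    generalize F (update (update x i a) j b') = w2
    generalize F (update (update x i a') j b) = w3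
    generalize F (update (update x i a') j b') = w4
    revert v0 v1 v2 v3 v4 w1 w2 w3 w4
    decide
  refine mte_conn (F := fun y : I → V4 => F (mglue I y z)) ?_ ?_ y y' h
  · intro x i
    simp only [mglue_update]
    exact hF _ _
  · rintro ⟨i, hi⟩ ⟨j, hj⟩
    have : ∀ j, Relation.ReflTransGen (MBad F) i j → ∃ hj : j ∈ I,
        Relation.ReflTransGen (MBad (fun y : I → V4 => F (mglue I y z))) ⟨i, hi⟩ ⟨j, hj⟩ := by
      intro j h
      induction h with
      | refl => exact ⟨hi, Relation.ReflTransGen.refl⟩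
      | tail _ h ih =>
        obtain ⟨hj, ih⟩ := ih
        exact ⟨hI _ hj _ h, ih.tail (hb _ hj _ (hI _ hj _ h) h)⟩
    exact (this j (hI' i hi j hj)).2

def mz (b : Bool) : ZMod 2 := if b then 1 else 0

theorem mte_linear [Fintype ι] {F : (ι → V4) → Bool} (hg : ∀ i j, i ≠ j → MGood F i j)
    (z : ι → V4) (hz : F z = false) (x : ι → V4) :
    mz (F x) = ∑ i, mz (F (update z i (x i))) := by
  have : ∀ s : Finset ι, mz (F (s.piecewise x z)) = ∑ i ∈ s, mz (F (update z i (x i))) := by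
    intro s
    induction s using Finset.induction_on with
    | empty => simp [hz, mz]
    | insert k s hk ih =>
      rw [Finset.sum_insert hk, ← ih, Finset.piecewise_insert]
      have := mte_split s (fun i _ j hj => hg i j (by rintro rfl; contradiction)) x z z
        (update z k (x k))
      have e1 : s.piecewise x (update z k (x k)) = update (s.piecewise x z) k (x k) := by
        ext l; by_cases hl : l = k
        · subst hl; simp [hk]
        · by_cases hs : l ∈ s <;> simp [hl, hs]
      have e2 : s.piecewise z (update z k (x k)) = update z k (x k) := by
        ext l; by_cases hl : l = k
        · subst hl; simp [hk]
        · by_cases hs : l ∈ s <;> simp [hl, hs]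
      rw [e1, e2, Finset.piecewise_same, hz] at this
      revert this
      generalize F (s.piecewise x z) = v1
      generalize F (update (s.piecewise x z) k (x k)) = v2
      generalize F (update z k (x k)) = v3
      revert v1 v2 v3; decide
  simpa using this Finset.univ

end Generic2

section Dec
open Function

theorem mq_bij {n : ℕ} {f : (Fin n → V4) → V4} :
    IsNQuasigroup f ↔ ∀ a i, Bijective (fun x => f (update a i x)) := by
  simp only [IsNQuasigroup, bijective_iff_existsUnique]

def MDec {ι : Type*} [DecidableEq ι] (q : (ι → V4) → V4) (D : Finset ι) : Prop :=
  ∀ y y' z z', q (D.piecewise y z) = q (D.piecewise y' z) →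
    q (D.piecewise y z') = q (D.piecewise y' z')

theorem mte_decomp {N : ℕ} {q : (Fin N → V4) → V4} (hq : IsNQuasigroup q) (D : Finset (Fin N))
    (h2 : 2 ≤ D.card) (hN : D.card < N) (hD : MDec q D) : IsDecomposable q := by
  rw [mq_bij] at hq
  obtain ⟨m, hm⟩ : ∃ m, D.card = m := ⟨_, rfl⟩
  rw [hm] at h2 hN
  have hcard : Fintype.card {j : Fin N // j.1 < m} = Fintype.card {j : Fin N // j ∈ D} := by
    rw [Fintype.card_coe, hm]
    have e : {j : Fin N // j.1 < m} ≃ Fin m :=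
      { toFun := fun j => ⟨j.1.1, j.2⟩
        invFun := fun j => ⟨⟨j.1, j.2.trans hN⟩, j.2⟩
        left_inv := fun _ => rfl
        right_inv := fun _ => rfl }
    rw [Fintype.card_congr e, Fintype.card_fin]
  let e0 := Fintype.equivOfCardEq hcard
  let σ : Equiv.Perm (Fin N) := e0.extendSubtype
  have hσ : ∀ j, σ j ∈ D ↔ j.1 < m := by
    intro j
    constructor
    · intro h; by_contra hn
      exact e0.extendSubtype_not_mem j hn h
    · intro h; exact e0.extendSubtype_mem j h
  have hσ' : ∀ k, k ∈ D ↔ (σ.symm k).1 < m := by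
    intro k; rw [← hσ]; simp
  clear_value σ
  clear e0 hcard
  have h0 : 0 < m := by omega
  set i0 : Fin N := σ ⟨0, by omega⟩ with hi0
  have hi0D : i0 ∈ D := (hσ _).2 h0
  obtain ⟨r, hr1, hr2⟩ := bijective_iff_has_inverse.1 (hq (fun _ => 0) i0)
  have hrb : Bijective r := bijective_iff_has_inverse.2 ⟨_, hr2, hr1⟩
  let g : (Fin m → V4) → V4 := fun y =>
    q (fun k => if h : (σ.symm k).1 < m then y ⟨(σ.symm k).1, h⟩ else 0)
  let H : (Fin (N - m + 1) → V4) → (Fin N → V4) := fun w k =>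
    if h : (σ.symm k).1 < m then (if k = i0 then r (w 0) else 0)
      else w ⟨(σ.symm k).1 - m + 1, by have := (σ.symm k).2; omega⟩
  refine ⟨m, h2, hN, fun w => q (H w), g, σ, ?_, ?_, ?_⟩
  · rw [mq_bij]
    intro w i
    refine Fin.cases ?_ (fun j => ?_) i
    · have : (fun x => q (H (update w 0 x))) = (fun x => q (update (H w) i0 x)) ∘ r := by
        ext1 x
        simp only [comp]
        congr 1
        ext1 k
        by_cases hk : k = i0
        · subst hk
          have : (σ.symm i0).1 < m := (hσ' _).1 hi0D
          simp [H, this]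
        · by_cases hk' : (σ.symm k).1 < m
          · simp [H, hk, hk']
          · simp only [H, hk, hk', dite_false, update_of_ne, ne_eq, not_false_eq_true]
            rw [update_of_ne]
            intro e
            exact absurd (congrArg Fin.val e) (by simp)
      rw [this]
      exact (hq _ _).comp hrb
    · have : (fun x => q (H (update w j.succ x))) =
          (fun x => q (update (H w) (σ ⟨m + j.1, by have := j.2; omega⟩) x)) := by
        ext1 x
        congr 1
        ext1 k
        by_cases hk : k = σ ⟨m + j.1, by have := j.2; omega⟩
        · subst hk
          simp only [H, Equiv.symm_apply_apply, update_self, Nat.not_lt.2 (Nat.le_add_right m j.1),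
            dite_false, Nat.add_sub_cancel_left]
          exact update_self (f := w) j.succ x
        · by_cases hk' : (σ.symm k).1 < m
          · simp [H, hk, hk', update_of_ne, (Fin.succ_ne_zero j).symm]
          · simp only [H, hk', dite_false, update_of_ne hk]
            rw [update_of_ne]
            intro e
            apply hk
            rw [← Equiv.symm_apply_eq]
            have := congrArg Fin.val e
            ext
            simp at this ⊢
            omega
      rw [this]
      exact hq _ _
  · rw [mq_bij]
    intro y i
    have : (fun x => g (update y i x)) = (fun x => q (update (fun k => if h : (σ.symm k).1 < m then y ⟨(σ.symm k).1, h⟩ else 0) (σ ⟨i.1, i.2.trans hN⟩) x)) := by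
      ext1 x
      simp only [g]
      congr 1
      ext1 k
      by_cases hk : k = σ ⟨i.1, i.2.trans hN⟩
      · subst hk; simp
      · rw [update_of_ne hk]
        by_cases hk' : (σ.symm k).1 < m
        · simp only [hk', dite_true]
          rw [update_of_ne]
          intro e
          apply hk
          rw [← Equiv.symm_apply_eq]
          have := congrArg Fin.val e
          ext
          simpa using this
        · simp [hk']
    rw [this]
    exact hq _ _
  · intro x
    set t := g (fun j => x (σ ⟨j.1, j.2.trans hN⟩)) with ht
    have e1 : q (D.piecewise x (fun _ => 0)) = t := by
      rw [ht]; simp only [g]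
      congr 1; ext1 k
      by_cases hk : (σ.symm k).1 < m
      · have := (hσ' k).2 hk
        simp [this, hk]
      · have := mt (hσ' k).1 hk
        simp [this, hk]
    have e2 : q (D.piecewise (update (fun _ => 0) i0 (r t)) (fun _ => 0)) = t := by
      have : D.piecewise (update (fun _ => (0 : V4)) i0 (r t)) (fun _ => 0)
          = update (fun _ => 0) i0 (r t) := by
        ext1 k
        by_cases hk : k = i0
        · subst hk; simp [hi0D]
        · by_cases hk' : k ∈ D <;> simp [hk, hk']
      rw [this]; exact hr2 t
    have := hD x _ _ x (e1.trans e2.symm)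
    rw [Finset.piecewise_same] at this
    rw [this]
    congr 1
    ext1 k
    by_cases hk : (σ.symm k).1 < m
    · have hkD := (hσ' k).2 hk
      by_cases hk0 : k = i0
      · subst hk0; simp [H, hk, hkD]
      · simp [H, hk, hkD, hk0]
    · have hkD := mt (hσ' k).1 hk
      have key : (⟨(σ.symm k).1 - m + 1, by have := (σ.symm k).2; omega⟩ : Fin (N - m + 1)) =
          Fin.succ ⟨(σ.symm k).1 - m, by have := (σ.symm k).2; omega⟩ := by
        ext; simp
      simp only [H, hk, hkD, dite_false, key, Fin.cons_succ, Finset.piecewise_eq_of_notMem,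
        not_false_eq_true]
      congr 1
      rw [← Equiv.symm_apply_eq]
      ext
      simp
      omega

end Dec

section Main
open Function

variable {ι : Type*} [DecidableEq ι]

def mlev (c d t : V4) : Bool := decide (t = c ∨ t = d)

theorem mlev3 : ∀ c d : V4, c ≠ d → ∀ t t' t'' : V4, mlev c d t = mlev c d t' → t ≠ t' →
    mlev c d t' = mlev c d t'' → t' ≠ t'' → t'' = t := by decide

theorem mte_bal_p {p : (ι → V4) → V4} (hp : ∀ w i, Injective fun x => p (update w i x))
    {c d : V4} (hcd : c ≠ d) : MBal (fun w => mlev c d (p w)) := by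
  intro w i
  have hb : Bijective fun x => p (update w i x) := Finite.injective_iff_bijective.1 (hp w i)
  let e := Equiv.ofBijective _ hb
  have : (Finset.univ.filter (fun x => mlev c d (p (update w i x)) = true)) =
      ({c, d} : Finset V4).map e.symm.toEmbedding := by
    ext x
    simp only [mlev, decide_eq_true_eq, Finset.mem_filter, Finset.mem_univ, true_and,
      Finset.mem_map_equiv, Equiv.symm_symm, Finset.mem_insert, Finset.mem_singleton]
    rfl
  rw [this, Finset.card_map, Finset.card_pair hcd]

theorem mte_pdec [Fintype ι] {p : (ι → V4) → V4}
    (hp : ∀ w i, Injective fun x => p (update w i x))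
    {c d : V4} (hcd : c ≠ d) (I : Finset ι)
    (hI : ∀ i ∈ I, ∀ j, MBad (fun w => mlev c d (p w)) i j → j ∈ I)
    (hI' : ∀ i ∈ I, ∀ j ∈ I, Relation.ReflTransGen (MBad (fun w => mlev c d (p w))) i j) :
    MDec p I := by
  have hF := mte_bal_p hp hcd
  have hg : ∀ i ∈ I, ∀ j ∉ I, MGood (fun w => mlev c d (p w)) i j := by
    intro i hi j hj
    by_contra hn
    exact hj (hI i hi j ⟨by rintro rfl; exact hj hi, hn⟩)
  intro y y' z z' h
  have hR := mte_sub_conn hF I hI hI' z (fun i => y i) (fun i => y' i)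
    (by simp only [mglue_res, h])
  have key : ∀ u v : I → V4, MR (fun y => mlev c d (p (mglue I y z))) u v →
      (∀ z', p (mglue I v z') = p (mglue I u z')) ∨
      (∀ z', p (mglue I u z') ≠ p (mglue I v z') ∧
        mlev c d (p (mglue I u z')) = mlev c d (p (mglue I v z'))) := by
    intro u v huv
    induction huv with
    | refl => exact Or.inl fun _ => rfl
    | @tail v v' _ hvv ih =>
      obtain ⟨h1, i, e, rfl⟩ := hvv
      by_cases he : e = v i
      · subst he; simpa using ih
      have h2 : ∀ z', p (mglue I v z') ≠ p (mglue I (update v i e) z') ∧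
        mlev c d (p (mglue I v z')) = mlev c d (p (mglue I (update v i e) z')) := by
        intro z'
        constructor
        · intro e'
          rw [mglue_update] at e'
          have e'' : p (update (mglue I v z') i (mglue I v z' i)) =
            p (update (mglue I v z') i e) := by rw [update_eq_self]; exact e'
          have := hp _ _ e''
          apply he
          rw [← this]
          simp [mglue]
        · have := mte_split I hg (mglue I v z) (mglue I (update v i e) z) z z'
          have k : ∀ v z', I.piecewise (mglue I v z) z' = mglue I v z' := by
            intro v z'; ext1 k; by_cases hk : k ∈ I <;> simp [hk, mglue]
          simp only [k] at this
          simp only at h1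
          rw [h1] at this
          revert this
          generalize mlev c d (p (mglue I v z')) = v1
          generalize mlev c d (p (mglue I (update v i e) z')) = v2
          generalize mlev c d (p (mglue I (update v i e) z)) = v3
          revert v1 v2 v3; decide
      rcases ih with ih | ih
      · right; intro z'; rw [← ih z']; exact h2 z'
      · left; intro z'
        exact mlev3 c d hcd _ _ _ (ih z').2 (ih z').1 (h2 z').2 (h2 z').1
  rcases key _ _ hR with h1 | h1
  · have := h1 z'
    simp only [mglue_res] at this
    exact this.symm
  · have := (h1 z).1
    simp only [mglue_res] at this
    exact absurd h this

end Main

open Function in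
theorem more_than_two_extensions (n : ℕ) (hn : 3 ≤ n + 1)
    (a b c d : V4) (habcd : ({a, b, c, d} : Set V4) = Set.univ)
    (q : (Fin (n + 1) → V4) → V4) (hq : IsNQuasigroup q)
    (hext : 2 < Nat.card {f : (Fin (n + 1) → V4) → V4 //
        IsNQuasigroup f ∧
        ∀ x : Fin (n + 1) → V4,
          (x (Fin.last n) = a ∨ x (Fin.last n) = b) → f x = q x}) :
    IsSemilinear q ∨ IsDecomposable q := by
  have hall : ∀ x : V4, x = a ∨ x = b ∨ x = c ∨ x = d := by
    intro x
    have : x ∈ ({a, b, c, d} : Set V4) := by rw [habcd]; trivial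
    simpa using this
  have hdist : a ≠ b ∧ a ≠ c ∧ a ≠ d ∧ b ≠ c ∧ b ≠ d ∧ c ≠ d := by
    clear hext habcd
    revert a b c d; decide
  obtain ⟨hab, hac, had, hbc, hbd, hcd⟩ := hdist
  have hqb := mq_bij.1 hq
  set l := Fin.last n with hl
  choose p hp using fun w : Fin (n + 1) → V4 => (hqb w l).2 (w l)
  have hp' : ∀ w t, q (update w l t) = w l ↔ p w = t := by
    intro w t
    constructor
    · intro h; exact (hqb w l).1 ((hp w).trans h.symm)
    · rintro rfl; exact hp w
  have hpi : ∀ w i, Injective fun x => p (update w i x) := by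
    intro w i x x' h
    have h1 := (hp' (update w i x) _).2 rfl
    have h2 := (hp' (update w i x') _).2 h.symm
    by_cases hi : i = l
    · subst hi
      simp only [update_idem, update_self] at h1 h2
      exact h1.symm.trans h2
    · simp only [update_of_ne (Ne.symm hi)] at h1 h2
      rw [update_comm hi] at h1 h2
      exact (hqb _ i).1 (h1.trans h2.symm)
  set F : (Fin (n + 1) → V4) → Bool := fun w => mlev c d (p w) with hFdef
  have hF : MBal F := mte_bal_p hpi hcd
  -- F is not connected
  have hdis : ¬ ∀ x y, F x = F y → MR F x y := by
    intro hconn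
    obtain ⟨w0, hw0⟩ : ∃ w0, F w0 = true := by
      obtain ⟨x, hx⟩ := (Finite.injective_iff_bijective.1 (hpi (fun _ => 0) l)).2 c
      exact ⟨update (fun _ => 0) l x, by simp only [hFdef]; simp only at hx; rw [hx]; simp [mlev]⟩
    have hle : Nat.card {f : (Fin (n + 1) → V4) → V4 //
        IsNQuasigroup f ∧
        ∀ x : Fin (n + 1) → V4,
          (x l = a ∨ x l = b) → f x = q x} ≤ Nat.card Bool := by
      refine Nat.card_le_card_of_injective
        (fun f => decide (f.1 (update w0 l c) = w0 l)) ?_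
      -- basic facts about extensions
      have hS : ∀ f : (Fin (n + 1) → V4) → V4, IsNQuasigroup f →
          (∀ x, (x l = a ∨ x l = b) → f x = q x) → ∀ w,
          (F w = true ↔ (f (update w l c) = w l ∨ f (update w l d) = w l)) := by
        intro f hf hfe w
        have hfb := (mq_bij.1 hf w l)
        obtain ⟨t, ht⟩ := hfb.2 (w l)
        simp only at ht
        have hfa : f (update w l a) = q (update w l a) := hfe _ (by simp)
        have hfb' : f (update w l b) = q (update w l b) := hfe _ (by simp)
        have hF1 : F w = true ↔ (p w = c ∨ p w = d) := by simp [hFdef, mlev]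
        rw [hF1]
        have iq : ∀ s, f (update w l s) = w l ↔ s = t := by
          intro s
          constructor
          · intro h; exact hfb.1 (h.trans ht.symm)
          · rintro rfl; exact ht
        rw [iq, iq]
        have ia := iq a
        have ib := iq b
        rw [hfa, hp'] at ia
        rw [hfb', hp'] at ib
        have h1 := hall t
        have h2 := hall (p w)
        grind
      have hstep : ∀ f : (Fin (n + 1) → V4) → V4, IsNQuasigroup f →
          (∀ x, (x l = a ∨ x l = b) → f x = q x) → ∀ w i e, F w = true →
          F (update w i e) = true → e ≠ w i → 
          (f (update w l c) = w l ↔ ¬ f (update (update w i e) l c) = (update w i e) l) := by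
        intro f hf hfe w i e h1 h2 he
        have hfb := mq_bij.1 hf
        rw [hS f hf hfe] at h1 h2
        have hcd' : f (update w l c) ≠ f (update w l d) := fun e => hcd ((hfb w l).1 e)
        by_cases hi : i = l
        · subst hi
          simp only [update_idem, update_self] at h2 ⊢
          grind
        · simp only [update_of_ne (Ne.symm hi)] at h2 ⊢
          have hx : ∀ s, f (update w l s) ≠ f (update (update w i e) l s) := by
            intro s hs
            rw [update_comm hi] at hs
            have : f (update (update w l s) i ((update w l s) i)) =
              f (update (update w l s) i e) := by rw [update_eq_self]; exact hs
            have := (hfb _ i).1 this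
            rw [update_of_ne hi] at this
            exact he this.symm
          have hxc := hx c
          have hxd := hx d
          have hcd'' : f (update (update w i e) l c) ≠ f (update (update w i e) l d) :=
            fun e => hcd ((hfb _ l).1 e)
          grind
      rintro ⟨f, hf, hfe⟩ ⟨f', hf', hfe'⟩ h0
      simp only [decide_eq_decide] at h0
      have hpath : ∀ w, MR F w0 w → (f (update w l c) = w l ↔ f' (update w l c) = w l) := by
        intro w hw
        induction hw with
        | refl => exact h0
        | @tail v v' hv hvv ih =>
          have hFv : F v = true := by rw [← MR.lev hv, hw0]
          obtain ⟨h1, i, e, rfl⟩ := hvv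
          by_cases he : e = v i
          · subst he; simpa using ih
          have h2 := hstep f hf hfe v i e hFv (h1 ▸ hFv) he
          have h3 := hstep f' hf' hfe' v i e hFv (h1 ▸ hFv) he
          tauto
      have hcc : ∀ x, f (update x l c) = f' (update x l c) := by
        intro x
        have h1 : F (update x l (f (update x l c))) = true := by
          rw [hS f hf hfe]; left; simp
        have := (hpath _ (hconn w0 _ (hw0.trans h1.symm))).1 (by simp)
        simpa using this.symm
      have hdd : ∀ x, f (update x l d) = f' (update x l d) := by
        intro x
        have h1 : F (update x l (f (update x l d))) = true := by
          rw [hS f hf hfe]; right; simp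
        rw [hS f' hf' hfe'] at h1
        simp only [update_idem, update_self] at h1
        rcases h1 with h1 | h1
        · rw [← hcc] at h1
          exact absurd ((mq_bij.1 hf x l).1 h1) hcd
        · exact h1.symm
      have : f = f' := by
        ext1 x
        rcases hall (x l) with h | h | h | h
        · rw [hfe x (Or.inl h), hfe' x (Or.inl h)]
        · rw [hfe x (Or.inr h), hfe' x (Or.inr h)]
        · have := hcc x; rw [← h] at this; simpa using this
        · have := hdd x; rw [← h] at this; simpa using this
      subst this; rfl
    have h2 : Nat.card Bool = 2 := by simp
    rw [h2] at hle
    omega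
  have hnt : ¬ ∀ i j, Relation.ReflTransGen (MBad F) i j := fun h => hdis (mte_conn hF h)
  by_cases hlin : ∀ i j, i ≠ j → MGood F i j
  · left
    obtain ⟨z, hz⟩ : ∃ z, F z = false := by
      obtain ⟨x, hx⟩ := (Finite.injective_iff_bijective.1 (hpi (fun _ => 0) l)).2 a
      refine ⟨update (fun _ => 0) l x, ?_⟩
      simp only [hFdef]; simp only at hx; rw [hx]; simp [mlev, hac, had]
    let T : Fin (n + 1) → Finset V4 := fun i => Finset.univ.filter (fun e => F (update z i e) = true)
    have hT : ∀ i, (T i).card = 2 := fun i => hF z i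
    have hlin' : ∀ x, mz (F x) = ∑ i, if x i ∈ T i then (1 : ZMod 2) else 0 := by
      intro x
      rw [mte_linear hlin z hz x]
      refine Finset.sum_congr rfl fun i _ => ?_
      simp [mz, T]
    obtain ⟨e, f, hef, hTl⟩ := Finset.card_eq_two.1 (hT l)
    refine ⟨e, f, hef, update T l {c, d}, ?_, ?_⟩
    · intro i
      by_cases hi : i = l
      · subst hi; simp [Finset.card_pair hcd]
      · simp [update_of_ne hi, hT]
    · intro x
      have h1 := hlin' (update x l (q x))
      have h2 : p (update x l (q x)) = x l := by rw [← hp']; simp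
      rw [Fin.sum_univ_castSucc] at h1 ⊢
      have hne : ∀ i : Fin n, i.castSucc ≠ l := fun i => (Fin.castSucc_lt_last i).ne
      simp only [← hl, update_self, update_of_ne (hne _)] at h1 ⊢
      simp only [hFdef, h2] at h1
      simp only [SCode, Set.mem_ofPred_eq]
      rw [hTl] at h1
      simp only [mz, mlev, decide_eq_true_eq, Finset.mem_insert, Finset.mem_singleton] at h1 ⊢
      revert h1
      generalize (∑ i : Fin n, if x i.castSucc ∈ T i.castSucc then (1 : ZMod 2) else 0) = s
      by_cases hA : x l = c ∨ x l = d <;> by_cases hB : q x = e ∨ q x = f <;>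
        simp only [hA, hB, if_true, if_false, true_iff, false_iff] <;> revert s <;> decide
  · right
    push Not at hlin
    obtain ⟨i, j, hij, hbad⟩ := hlin
    classical
    let I : Finset (Fin (n + 1)) := Finset.univ.filter (fun k => Relation.ReflTransGen (MBad F) i k)
    have hmem : ∀ k, k ∈ I ↔ Relation.ReflTransGen (MBad F) i k := by intro k; simp [I]
    have hIc : 2 ≤ I.card := by
      have : ({i, j} : Finset _) ⊆ I := by
        intro k hk
        rw [hmem]
        simp only [Finset.mem_insert, Finset.mem_singleton] at hk
        rcases hk with rfl | rfl
        · exact Relation.ReflTransGen.refl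
        · exact Relation.ReflTransGen.single ⟨hij, hbad⟩
      rw [← Finset.card_pair hij]
      exact Finset.card_le_card this
    have hIu : I.card < n + 1 := by
      have : I ≠ Finset.univ := by
        intro e
        apply hnt
        intro k k'
        have h1 := (hmem k).1 (by rw [e]; simp)
        have h2 := (hmem k').1 (by rw [e]; simp)
        exact (mte_rtg_symm h1).trans h2
      have := (Finset.card_lt_iff_ne_univ I).2 this
      simpa using this
    have hdec : MDec p I := by
      refine mte_pdec hpi hcd I ?_ ?_
      · intro k hk k' hb
        rw [hmem] at hk ⊢
        exact hk.tail hb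
      · intro k hk k' hk'
        rw [hmem] at hk hk'
        exact (mte_rtg_symm hk).trans hk'
    have hpq : ∀ w t, p (update w l t) = w l ↔ q w = t := by
      intro w t
      rw [← hp']
      simp
    clear_value I
    clear hext hdis hnt hmem
    by_cases hlI : l ∈ I
    · -- inner block is the complement of I together with l
      refine mte_decomp hq (insert l Iᶜ) ?_ ?_ ?_
      · rw [Finset.card_insert_of_notMem (by simpa using hlI), Finset.card_compl,
          Fintype.card_fin]; omega
      · rw [Finset.card_insert_of_notMem (by simpa using hlI), Finset.card_compl,
          Fintype.card_fin]; omega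
      · intro y y' z z' h
        have e : ∀ (y z : Fin (n + 1) → V4) (s : V4), update ((insert l Iᶜ).piecewise y z) l s = I.piecewise (update z l s) y := by
          intro y z s
          ext1 k
          by_cases hk : k = l
          · subst hk; simp [hlI]
          · by_cases hkI : k ∈ I <;> simp [hk, hkI]
        have el : ∀ y z : Fin (n + 1) → V4, (insert l Iᶜ).piecewise y z l = y l := by
          intro y z; simp
        obtain ⟨s, hs⟩ : ∃ s, q ((insert l Iᶜ).piecewise y z) = s := ⟨_, rfl⟩
        obtain ⟨s', hs'⟩ : ∃ s, q ((insert l Iᶜ).piecewise y z') = s := ⟨_, rfl⟩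
        rw [hs] at h
        rw [hs']
        have h := h.symm
        rw [← hpq, e, el] at hs hs' h
        symm
        rw [← hpq, e, el, ← h]
        exact hdec _ _ y y' (hs'.trans hs.symm)
    · refine mte_decomp hq I hIc hIu ?_
      intro y y' z z' h
      have e : ∀ (y z : Fin (n + 1) → V4) (s : V4), update (I.piecewise y z) l s = I.piecewise y (update z l s) := by
        intro y z s
        ext1 k
        by_cases hk : k = l
        · subst hk; simp [hlI]
        · by_cases hkI : k ∈ I <;> simp [hk, hkI]
      have el : ∀ y z : Fin (n + 1) → V4, I.piecewise y z l = z l := by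
        intro y z; simp [hlI]
      obtain ⟨s, hs⟩ : ∃ s, q (I.piecewise y z) = s := ⟨_, rfl⟩
      obtain ⟨s', hs'⟩ : ∃ s, q (I.piecewise y z') = s := ⟨_, rfl⟩
      rw [hs] at h
      rw [hs']
      have h := h.symm
      rw [← hpq, e, el] at hs hs' h
      symm
      rw [← hpq, e, el, ← hs']
      exact hdec _ _ _ _ (h.trans hs.symm)
end

section
/- Let S ⊆ Σ^n be a splittable double-MDS-code and let γ be the number of connected components of its adjacency graph Γ(S). Then the number of MDS codes contained in S is exactly 2^γ. -/
/-- The `k`-edge through `x`. -/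
def kEdge {n : ℕ} (x : Fin n → V4) (k : Fin n) : Set (Fin n → V4) :=
  {y | ∃ a : V4, y = Function.update x k a}

/-- A (distance 2) MDS code: every edge meets it in exactly one vertex. -/
def IsMDSCode {n : ℕ} (C : Set (Fin n → V4)) : Prop :=
  ∀ (x : Fin n → V4) (k : Fin n), (kEdge x k ∩ C).ncard = 1

/-- A double-MDS-code: every edge meets it in exactly two vertices. -/
def IsDoubleMDSCode {n : ℕ} (S : Set (Fin n → V4)) : Prop :=
  ∀ (x : Fin n → V4) (k : Fin n), (kEdge x k ∩ S).ncard = 2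

/-- A set is splittable if it is the union of two disjoint MDS codes. -/
def IsSplittable {n : ℕ} (S : Set (Fin n → V4)) : Prop :=
  ∃ C₁ C₂ : Set (Fin n → V4),
    IsMDSCode C₁ ∧ IsMDSCode C₂ ∧ Disjoint C₁ C₂ ∧ S = C₁ ∪ C₂

/-- The adjacency graph `Γ(S)`: vertices are the elements of `S`, with edges
between vertices of `S` differing in exactly one coordinate. -/
def adjGraph {n : ℕ} (S : Set (Fin n → V4)) : SimpleGraph S :=
  SimpleGraph.fromRel
    (fun x y => {k : Fin n | (x : Fin n → V4) k ≠ (y : Fin n → V4) k}.ncard = 1)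

lemma adj_edge {n : ℕ} {S : Set (Fin n → V4)} (hS : IsDoubleMDSCode S) {x y : S}
    (h : (adjGraph S).Adj x y) :
    ∃ k, kEdge (x : Fin n → V4) k ∩ S = {(x : Fin n → V4), (y : Fin n → V4)} := by
  have h' : x ≠ y ∧ {k : Fin n | (x : Fin n → V4) k ≠ (y : Fin n → V4) k}.ncard = 1 := by
    unfold adjGraph at h
    rw [SimpleGraph.fromRel_adj] at h
    refine ⟨h.1, ?_⟩
    rcases h.2 with h | h
    · exact h
    · simpa only [ne_comm] using h
  obtain ⟨hne, hc⟩ := h'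
  obtain ⟨k, hk⟩ := Set.ncard_eq_one.1 hc
  refine ⟨k, ?_⟩
  symm
  apply Set.eq_of_subset_of_ncard_le
  · rintro z (rfl | rfl)
    · exact ⟨⟨(x : Fin n → V4) k, by simp⟩, x.2⟩
    · refine ⟨⟨(y : Fin n → V4) k, ?_⟩, y.2⟩
      funext j
      by_cases hj : j = k
      · subst hj; simp
      · have : j ∉ ({k} : Set (Fin n)) := hj
        rw [← hk] at this
        simp only [Set.mem_setOf_eq, not_not] at this
        simp [Function.update_of_ne hj, this]
  · rw [hS, Set.ncard_pair (fun h => hne (Subtype.ext h))]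
  · exact Set.toFinite _

lemma edge_adj {n : ℕ} {S : Set (Fin n → V4)} {x : Fin n → V4} {k : Fin n} {y z : S}
    (hy : (y : Fin n → V4) ∈ kEdge x k) (hz : (z : Fin n → V4) ∈ kEdge x k) (hne : y ≠ z) :
    (adjGraph S).Adj y z := by
  unfold adjGraph
  rw [SimpleGraph.fromRel_adj]
  refine ⟨hne, Or.inl ?_⟩
  rw [Set.ncard_eq_one]
  obtain ⟨a, ha⟩ := hy
  obtain ⟨b, hb⟩ := hz
  refine ⟨k, ?_⟩
  ext j
  simp only [Set.mem_setOf_eq, Set.mem_singleton_iff]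
  constructor
  · intro h
    by_contra hj
    apply h
    rw [ha, hb, Function.update_of_ne hj, Function.update_of_ne hj]
  · rintro rfl h
    apply hne
    apply Subtype.ext
    rw [ha, hb] at h ⊢
    simp only [Function.update_self] at h
    rw [h]

lemma mds_iff {n : ℕ} {S C : Set (Fin n → V4)} (hS : IsDoubleMDSCode S) (hC : C ⊆ S) :
    IsMDSCode C ↔ ∀ x y : S, (adjGraph S).Adj x y →
      ((x : Fin n → V4) ∈ C ↔ (y : Fin n → V4) ∉ C) := by
  have key : ∀ x k, kEdge x k ∩ C = (kEdge x k ∩ S) ∩ C := by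
    intro x k
    rw [Set.inter_assoc, Set.inter_eq_right.2 hC]
  constructor
  · intro h x y hxy
    obtain ⟨k, hk⟩ := adj_edge hS hxy
    have hne : (x : Fin n → V4) ≠ y := fun h => hxy.ne (Subtype.ext h)
    have h1 := h x k
    rw [key, hk] at h1
    by_cases hx : (x : Fin n → V4) ∈ C <;> by_cases hy : (y : Fin n → V4) ∈ C
    · rw [Set.inter_eq_left.2 (by rintro z (rfl | rfl) <;> assumption), Set.ncard_pair hne] at h1
      omega
    · simp [hx, hy]
    · simp [hx, hy]
    · have : ({(x : Fin n → V4), (y : Fin n → V4)} : Set _) ∩ C = ∅ := by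
        ext z
        simp only [Set.mem_inter_iff, Set.mem_insert_iff, Set.mem_singleton_iff,
          Set.mem_empty_iff_false, iff_false]
        rintro ⟨rfl | rfl, h⟩ <;> contradiction
      rw [this] at h1
      simp at h1
  · intro h x k
    obtain ⟨y, z, hne, hyz⟩ := Set.ncard_eq_two.1 (hS x k)
    have hy : y ∈ kEdge x k ∩ S := by rw [hyz]; simp
    have hz : z ∈ kEdge x k ∩ S := by rw [hyz]; simp
    have h1 := h ⟨y, hy.2⟩ ⟨z, hz.2⟩ (edge_adj hy.1 hz.1 (fun h => hne (congrArg Subtype.val h)))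
    simp only at h1
    rw [key, hyz, Set.ncard_eq_one]
    by_cases hyC : y ∈ C
    · refine ⟨y, ?_⟩
      have := h1.1 hyC
      ext w
      simp only [Set.mem_inter_iff, Set.mem_insert_iff, Set.mem_singleton_iff]
      grind
    · refine ⟨z, ?_⟩
      have : z ∈ C := by tauto
      ext w
      simp only [Set.mem_inter_iff, Set.mem_insert_iff, Set.mem_singleton_iff]
      grind

/-- Proposition 1: a splittable double-MDS-code `S` whose adjacency graph has
`γ` connected components contains exactly `2^γ` MDS codes. -/
theorem card_MDS_codes_in_splittable (n : ℕ) (S : Set (Fin n → V4))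
    (hS : IsDoubleMDSCode S) (hsplit : IsSplittable S) :
    Nat.card {C : Set (Fin n → V4) // IsMDSCode C ∧ C ⊆ S} =
      2 ^ Nat.card (adjGraph S).ConnectedComponent := by
  classical
  obtain ⟨D, D', hD, -, -, hDS⟩ := hsplit
  have hDsub : D ⊆ S := by rw [hDS]; exact Set.subset_union_left
  have hDa := (mds_iff hS hDsub).1 hD
  let G := adjGraph S
  let F : Set G.ConnectedComponent → Set (Fin n → V4) := fun T =>
    {x | ∃ h : x ∈ S, ¬ (x ∈ D ↔ G.connectedComponentMk ⟨x, h⟩ ∈ T)}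
  have hFsub : ∀ T, F T ⊆ S := fun T x hx => hx.1
  have hFmem : ∀ T (x : S), (x : Fin n → V4) ∈ F T ↔
      ¬ ((x : Fin n → V4) ∈ D ↔ G.connectedComponentMk x ∈ T) := by
    intro T x
    exact ⟨fun ⟨_, h⟩ => h, fun h => ⟨x.2, h⟩⟩
  have hF : ∀ T, IsMDSCode (F T) := by
    intro T
    rw [mds_iff hS (hFsub T)]
    intro x y hxy
    have e : G.connectedComponentMk x = G.connectedComponentMk y :=
      SimpleGraph.ConnectedComponent.sound hxy.reachable
    have := hDa x y hxy
    rw [hFmem, hFmem, e]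
    tauto
  let f : Set G.ConnectedComponent → {C : Set (Fin n → V4) // IsMDSCode C ∧ C ⊆ S} :=
    fun T => ⟨F T, hF T, hFsub T⟩
  have hf : Function.Bijective f := by
    constructor
    · intro T T' h
      have h' : F T = F T' := congrArg Subtype.val h
      ext c
      induction c using SimpleGraph.ConnectedComponent.ind with
      | h x =>
        have h1 := hFmem T x
        have h2 := hFmem T' x
        rw [h'] at h1
        tauto
    · rintro ⟨C, hC, hCS⟩
      have hCa := (mds_iff hS hCS).1 hC
      have hconst : ∀ x y : S, G.Reachable x y →
          (((x : Fin n → V4) ∈ C ↔ (x : Fin n → V4) ∈ D) ↔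
            ((y : Fin n → V4) ∈ C ↔ (y : Fin n → V4) ∈ D)) := by
        rintro x y ⟨w⟩
        induction w with
        | nil => rfl
        | cons h p ih =>
          have h1 := hCa _ _ h
          have h2 := hDa _ _ h
          rw [← ih]
          tauto
      refine ⟨{c | ∃ x : S, G.connectedComponentMk x = c ∧
        ¬ ((x : Fin n → V4) ∈ C ↔ (x : Fin n → V4) ∈ D)}, ?_⟩
      apply Subtype.ext
      ext x
      by_cases hx : x ∈ S
      · refine (hFmem _ ⟨x, hx⟩).trans ?_
        have : (G.connectedComponentMk ⟨x, hx⟩ ∈ {c | ∃ x : S, G.connectedComponentMk x = c ∧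
            ¬ ((x : Fin n → V4) ∈ C ↔ (x : Fin n → V4) ∈ D)}) ↔ ¬ (x ∈ C ↔ x ∈ D) := by
          constructor
          · rintro ⟨y, hy, h⟩
            have := hconst _ _ (SimpleGraph.ConnectedComponent.exact hy)
            simp only at this
            tauto
          · intro h
            exact ⟨⟨x, hx⟩, rfl, h⟩
        rw [this]
        simp only
        tauto
      · exact ⟨fun h => absurd (hFsub _ h) hx, fun h => absurd (hCS h) hx⟩
  rw [← Nat.card_eq_of_bijective f hf]
  haveI : Fintype G.ConnectedComponent := Fintype.ofFinite _
  rw [Nat.card_eq_fintype_card, Fintype.card_set, ← Nat.card_eq_fintype_card]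
end

section
/- Let S₁, S₂ ⊆ Σ^n be double-MDS-codes. (a) If there is a nonempty double-code S₀ with S₀ ⊆ S₁ ∩ S₂, then S₁ = S₂. (b) If there is a nonempty double-code S₀ with S₀ ⊆ S₁ \ S₂, then S₁ = Σ^n \ S₂. -/
/-- A double-code: every edge through a point of `S` meets `S` in exactly
two vertices. -/
def IsDoubleCode {n : ℕ} (S : Set (Fin n → V4)) : Prop :=
  ∀ x ∈ S, ∀ k : Fin n, (kEdge x k ∩ S).ncard = 2

open Classical in
lemma edge_card {n : ℕ} (S : Set (Fin n → V4)) (x : Fin n → V4) (k : Fin n) :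
    (kEdge x k ∩ S).ncard = (Finset.univ.filter fun a => Function.update x k a ∈ S).card := by
  have h : kEdge x k ∩ S = (Function.update x k) '' {a | Function.update x k a ∈ S} := by
    ext y
    constructor
    · rintro ⟨⟨a, rfl⟩, h⟩
      exact ⟨a, h, rfl⟩
    · rintro ⟨a, h, rfl⟩
      exact ⟨⟨a, rfl⟩, h⟩
  rw [h, Set.ncard_image_of_injective _ (Function.update_injective x k),
    ← Set.ncard_coe_finset]
  congr 1
  ext a
  simp

def layer {n : ℕ} (S : Set (Fin (n+1) → V4)) (a : V4) : Set (Fin n → V4) :=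
  {y | (Fin.cons a y : Fin (n+1) → V4) ∈ S}

open Classical in
lemma layer_card {n : ℕ} (S : Set (Fin (n+1) → V4)) (a : V4) (y : Fin n → V4) (k : Fin n) :
    (kEdge y k ∩ layer S a).ncard
      = (kEdge (Fin.cons a y : Fin (n+1) → V4) k.succ ∩ S).ncard := by
  rw [edge_card, edge_card]
  simp only [layer, Set.mem_ofPred_eq, Fin.cons_update]

open Classical in
lemma vert_card {n : ℕ} (S : Set (Fin (n+1) → V4)) (a : V4) (y : Fin n → V4) :
    (kEdge (Fin.cons a y : Fin (n+1) → V4) 0 ∩ S).ncard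
      = (Finset.univ.filter fun b => y ∈ layer S b).card := by
  rw [edge_card]
  simp only [layer, Set.mem_ofPred_eq, Fin.update_cons_zero]
  congr!

lemma agree_off (T U : Finset V4) (d : V4) (h : ∀ x, x ≠ d → (x ∈ T ↔ x ∈ U))
    (hc : T.card = U.card) : T = U := by
  have he : T.erase d = U.erase d := by
    ext x
    simp only [Finset.mem_erase]
    constructor
    · rintro ⟨h1, h2⟩
      exact ⟨h1, (h x h1).1 h2⟩
    · rintro ⟨h1, h2⟩
      exact ⟨h1, (h x h1).2 h2⟩
  have h1 := congrArg Finset.card he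
  rw [Finset.card_erase_eq_ite, Finset.card_erase_eq_ite] at h1
  have hd : d ∈ T ↔ d ∈ U := by
    constructor
    · intro hT
      by_contra hU
      have := Finset.card_pos.2 ⟨d, hT⟩
      simp only [hT, hU, if_true, if_false] at h1
      omega
    · intro hU
      by_contra hT
      have := Finset.card_pos.2 ⟨d, hU⟩
      simp only [hT, hU, if_true, if_false] at h1
      omega
  ext x
  by_cases hx : x = d
  · subst hx; exact hd
  · exact h x hx

lemma pair_eq (T : Finset V4) (a b : V4) (hab : a ≠ b) (hT : T.card = 2)
    (h : a ∈ T ↔ b ∈ T) : T = if a ∈ T then {a, b} else {a, b}ᶜ := by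
  split_ifs with ha
  · symm
    apply Finset.eq_of_subset_of_card_le
    · intro x hx
      simp only [Finset.mem_insert, Finset.mem_singleton] at hx
      rcases hx with rfl | rfl
      · exact ha
      · exact h.1 ha
    · rw [hT, Finset.card_pair hab]
  · apply Finset.eq_of_subset_of_card_le
    · intro x hx
      simp only [Finset.mem_compl, Finset.mem_insert, Finset.mem_singleton]
      rintro (rfl | rfl)
      · exact ha hx
      · exact ha (h.2 hx)
    · rw [hT, Finset.card_compl, Finset.card_pair hab]; simp

open Classical in
lemma main_a : ∀ (n : ℕ) (S₁ S₂ S₀ : Set (Fin n → V4)), IsDoubleMDSCode S₁ →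
    IsDoubleMDSCode S₂ → S₀.Nonempty → IsDoubleCode S₀ → S₀ ⊆ S₁ → S₀ ⊆ S₂ → S₁ = S₂ := by
  intro n
  induction n with
  | zero =>
    intro S₁ S₂ S₀ _ _ ⟨x, hx⟩ _ s1 s2
    ext y
    rw [Subsingleton.elim y x]
    exact ⟨fun _ => s2 hx, fun _ => s1 hx⟩
  | succ n ih =>
    intro S₁ S₂ S₀ h1 h2 ⟨x, hx⟩ h0 s1 s2
    have l1 : ∀ a, IsDoubleMDSCode (layer S₁ a) := fun a y k => by
      rw [layer_card]; exact h1 _ _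
    have l2 : ∀ a, IsDoubleMDSCode (layer S₂ a) := fun a y k => by
      rw [layer_card]; exact h2 _ _
    have l0 : ∀ a, IsDoubleCode (layer S₀ a) := fun a y hy k => by
      rw [layer_card]; exact h0 _ hy _
    have v1 : ∀ y, (Finset.univ.filter fun b => y ∈ layer S₁ b).card = 2 := fun y => by
      rw [← vert_card S₁ 0]; exact h1 _ _
    have v2 : ∀ y, (Finset.univ.filter fun b => y ∈ layer S₂ b).card = 2 := fun y => by
      rw [← vert_card S₂ 0]; exact h2 _ _
    have v0 : ∀ a y, y ∈ layer S₀ a →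
        (Finset.univ.filter fun b => y ∈ layer S₀ b).card = 2 := fun a y hy => by
      rw [← vert_card S₀ a]; exact h0 _ hy _
    have s1' : ∀ a, layer S₀ a ⊆ layer S₁ a := fun a y hy => s1 hy
    have s2' : ∀ a, layer S₀ a ⊆ layer S₂ a := fun a y hy => s2 hy
    have agree : ∀ a, (layer S₀ a).Nonempty → layer S₁ a = layer S₂ a := fun a ha =>
      ih _ _ _ (l1 a) (l2 a) ha (l0 a) (s1' a) (s2' a)
    have hx0 : Fin.tail x ∈ layer S₀ (x 0) := by
      simpa [layer, Fin.cons_self_tail] using hx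
    obtain ⟨a, b, hab, hs⟩ := Finset.card_eq_two.1 (v0 _ _ hx0)
    have hma : Fin.tail x ∈ layer S₀ a := by
      have : a ∈ (Finset.univ.filter fun b => Fin.tail x ∈ layer S₀ b) := by rw [hs]; simp
      simpa using this
    have hmb : Fin.tail x ∈ layer S₀ b := by
      have : b ∈ (Finset.univ.filter fun b => Fin.tail x ∈ layer S₀ b) := by rw [hs]; simp
      simpa using this
    have key : ∀ y, (Finset.univ.filter fun b => y ∈ layer S₁ b)
        = (Finset.univ.filter fun b => y ∈ layer S₂ b) := by
      intro y
      by_cases hc : ∃ c, c ≠ a ∧ c ≠ b ∧ (layer S₀ c).Nonempty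
      · obtain ⟨c, hca, hcb, hcn⟩ := hc
        obtain ⟨d, hd⟩ : ∃ d : V4, ∀ z, z ≠ d → z = a ∨ z = b ∨ z = c := by
          clear * - hab hca hcb
          revert a b c
          decide
        refine agree_off _ _ d ?_ ((v1 y).trans (v2 y).symm)
        intro z hz
        have : layer S₁ z = layer S₂ z := by
          rcases hd z hz with rfl | rfl | rfl
          · exact agree _ ⟨_, hma⟩
          · exact agree _ ⟨_, hmb⟩
          · exact agree _ hcn
        simp [this]
      · have sub : layer S₀ a ⊆ layer S₀ b := by
          intro z hz
          have hsub : (Finset.univ.filter fun b => z ∈ layer S₀ b) ⊆ {a, b} := by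
            intro c hcz
            simp only [Finset.mem_filter, Finset.mem_univ, true_and] at hcz
            simp only [Finset.mem_insert, Finset.mem_singleton]
            by_contra hcon
            push Not at hcon
            exact hc ⟨c, hcon.1, hcon.2, ⟨z, hcz⟩⟩
          have he := Finset.eq_of_subset_of_card_le hsub
            (by rw [v0 a z hz, Finset.card_pair hab])
          have : b ∈ (Finset.univ.filter fun b => z ∈ layer S₀ b) := by rw [he]; simp
          simpa using this
        have e1 : layer S₁ a = layer S₁ b := ih _ _ _ (l1 a) (l1 b) ⟨_, hma⟩ (l0 a) (s1' a)
          (sub.trans (s1' b))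
        have e2 : layer S₂ a = layer S₂ b := ih _ _ _ (l2 a) (l2 b) ⟨_, hma⟩ (l0 a) (s2' a)
          (sub.trans (s2' b))
        have e := agree a ⟨_, hma⟩
        rw [pair_eq _ a b hab (v1 y) (by simp [e1]), pair_eq _ a b hab (v2 y) (by simp [e2])]
        simp [e]
    ext z
    have := Finset.ext_iff.1 (key (Fin.tail z)) (z 0)
    simp only [Finset.mem_filter, Finset.mem_univ, true_and] at this
    simpa only [layer, Set.mem_ofPred_eq, Fin.cons_self_tail] using this

open Classical in
lemma compl_mds {n : ℕ} {S : Set (Fin n → V4)} (h : IsDoubleMDSCode S) :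
    IsDoubleMDSCode Sᶜ := by
  intro x k
  have h1 := h x k
  rw [edge_card] at h1 ⊢
  have := Finset.card_filter_add_card_filter_not (s := (Finset.univ : Finset V4))
    (fun a => Function.update x k a ∈ S)
  simp only [Finset.card_univ, Fintype.card_fin] at this
  simp only [Set.mem_compl_iff]
  omega

/-- Proposition 3 (unique extension of a double-code): for double-MDS-codes
`S₁, S₂`, (a) a nonempty double-code inside `S₁ ∩ S₂` forces `S₁ = S₂`;
(b) a nonempty double-code inside `S₁ \ S₂` forces `S₁ = Σ^n \ S₂`. -/
theorem unique_extension_of_double_code (n : ℕ)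
    (S₁ S₂ : Set (Fin n → V4))
    (h₁ : IsDoubleMDSCode S₁) (h₂ : IsDoubleMDSCode S₂) :
    (∀ S₀ : Set (Fin n → V4),
        S₀.Nonempty → IsDoubleCode S₀ → S₀ ⊆ S₁ ∩ S₂ → S₁ = S₂) ∧
    (∀ S₀ : Set (Fin n → V4),
        S₀.Nonempty → IsDoubleCode S₀ → S₀ ⊆ S₁ \ S₂ → S₁ = S₂ᶜ) := by
  exact ⟨fun S₀ hn h0 hs => main_a n S₁ S₂ S₀ h₁ h₂ hn h0 (fun _ hx => (hs hx).1)
      (fun _ hx => (hs hx).2),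
    fun S₀ hn h0 hs => main_a n S₁ S₂ᶜ S₀ h₁ (compl_mds h₂) hn h0 (fun _ hx => (hs hx).1)
      (fun _ hx => (hs hx).2)⟩
end

section
/- Let n ≥ 4 and let {P₁, P₂, P₃} be a partition of the Boolean n-cube {0,1}^n into three nonempty sets such that for every k ∈ {1,…,n} and every b ∈ {0,1}, at least one of the layers P₁|_k^b, P₂|_k^b, P₃|_k^b is empty. Then {P₁, P₂, P₃} = {{ᾱ}, {¬ᾱ}, {0,1}^n \ {ᾱ, ¬ᾱ}} for some ᾱ ∈ {0,1}^n, where ¬ᾱ denotes the coordinatewise complement of ᾱ. -/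
def AvoidsLayer {n : ℕ} (P : Set (Fin n → Bool)) (k : Fin n) (b : Bool) : Prop :=
  ∀ x ∈ P, x k ≠ b

def OppPair {n : ℕ} (P Q : Set (Fin n → Bool)) (k : Fin n) : Prop :=
  ∃ b, AvoidsLayer P k b ∧ AvoidsLayer Q k (!b)

lemma no_rep {n : ℕ} {P Q R : Set (Fin n → Bool)} (hc : ∀ x, x ∈ P ∨ x ∈ Q ∨ x ∈ R)
    {k l m : Fin n} (hkl : k ≠ l) (hkm : k ≠ m) (hlm : l ≠ m) {a b c : Bool}
    (h1 : AvoidsLayer P k a) (h2 : AvoidsLayer Q l b) (h3 : AvoidsLayer R m c) : False := by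
  rcases hc (fun i => if i = k then a else if i = l then b else c) with h | h | h
  · exact h1 _ h (by simp)
  · exact h2 _ h (by simp [hkl.symm])
  · exact h3 _ h (by simp [hkm.symm, hlm.symm])

lemma no_mix {n : ℕ} (hn : 3 ≤ n) {P Q R : Set (Fin n → Bool)}
    (hc : ∀ x, x ∈ P ∨ x ∈ Q ∨ x ∈ R)
    (ht : ∀ k, OppPair P Q k ∨ OppPair P R k ∨ OppPair Q R k)
    {k l : Fin n} (hkl : k ≠ l) (h1 : OppPair P Q k) (h2 : OppPair P R l) : False := by
  obtain ⟨m, hm⟩ : ∃ m, m ∉ ({k, l} : Finset (Fin n)) := by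
    apply Finset.exists_mem_notMem_of_card_lt_card (s := {k, l}) (t := Finset.univ) _ |>.imp
    · intro a h; exact h.2
    · have := Finset.card_le_two (a := k) (b := l)
      simp only [Finset.card_univ, Fintype.card_fin]; omega
  simp only [Finset.mem_insert, Finset.mem_singleton, not_or] at hm
  obtain ⟨hmk, hml⟩ := hm
  obtain ⟨b, hb, hb2⟩ := h1
  obtain ⟨c, hcc, hc2⟩ := h2
  rcases ht m with ⟨d, hd, hd2⟩ | ⟨d, hd, hd2⟩ | ⟨d, hd, hd2⟩
  · exact no_rep hc hmk hml hkl hd hb2 hc2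
  · exact no_rep hc hmk hml hkl hd hb2 hc2
  · exact no_rep hc hkl.symm (Ne.symm hml) (Ne.symm hmk) hcc hb2 hd2

lemma opp_symm {n : ℕ} {P Q : Set (Fin n → Bool)} {k : Fin n} (h : OppPair P Q k) :
    OppPair Q P k := by
  obtain ⟨b, h1, h2⟩ := h
  exact ⟨!b, h2, by simpa using h1⟩

lemma final_form {n : ℕ} {P Q R : Set (Fin n → Bool)} (hP : P.Nonempty) (hQ : Q.Nonempty)
    (hc : ∀ x, x ∈ P ∨ x ∈ Q ∨ x ∈ R) (hPR : Disjoint P R) (hQR : Disjoint Q R)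
    (h : ∀ k, OppPair P Q k) :
    ∃ α : Fin n → Bool, P = {α} ∧ Q = {fun i => !(α i)} ∧
      R = ({α, fun i => !(α i)} : Set (Fin n → Bool))ᶜ := by
  choose b hb hb2 using h
  have e1 : P = {fun i => !(b i)} := by
    refine hP.subset_singleton_iff.1 fun x hx => ?_
    funext i
    have := hb i x hx
    revert this; cases x i <;> cases b i <;> simp
  have e2 : Q = {fun i => !(!(b i))} := by
    refine hQ.subset_singleton_iff.1 fun x hx => ?_
    funext i
    have := hb2 i x hx
    revert this; cases x i <;> cases b i <;> simp
  refine ⟨fun i => !(b i), e1, e2, ?_⟩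
  rw [Set.insert_eq, ← e1, ← e2]
  ext x
  have h1 := hc x
  have h2 : x ∈ P → x ∉ R := fun a => Set.disjoint_left.1 hPR a
  have h3 : x ∈ Q → x ∉ R := fun a => Set.disjoint_left.1 hQR a
  simp only [Set.mem_compl_iff, Set.mem_union]
  tauto

/-- Proposition 6: if `{P₁,P₂,P₃}` is a partition of the Boolean `n`-cube
(`n ≥ 4`) into three nonempty sets such that for every direction `k` and
every value `b` at least one of the layers `P₁|ₖᵇ`, `P₂|ₖᵇ`, `P₃|ₖᵇ` is
empty, then the partition is `{{ᾱ}, {¬ᾱ}, cube \ {ᾱ,¬ᾱ}}` for some vertex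
`ᾱ` (`¬ᾱ` being its coordinatewise complement). -/
theorem partition_of_boolean_cube (n : ℕ) (hn : 4 ≤ n)
    (P₁ P₂ P₃ : Set (Fin n → Bool))
    (hne₁ : P₁.Nonempty) (hne₂ : P₂.Nonempty) (hne₃ : P₃.Nonempty)
    (hcover : P₁ ∪ P₂ ∪ P₃ = Set.univ)
    (hd₁₂ : Disjoint P₁ P₂) (hd₁₃ : Disjoint P₁ P₃) (hd₂₃ : Disjoint P₂ P₃)
    (hlayers : ∀ (k : Fin n) (b : Bool),
      (∀ x ∈ P₁, x k ≠ b) ∨ (∀ x ∈ P₂, x k ≠ b) ∨ (∀ x ∈ P₃, x k ≠ b)) :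
    ∃ α : Fin n → Bool,
      ({P₁, P₂, P₃} : Set (Set (Fin n → Bool))) =
        {{α}, {fun i => !(α i)},
          ({α, fun i => !(α i)} : Set (Fin n → Bool))ᶜ} := by
  have hc : ∀ x, x ∈ P₁ ∨ x ∈ P₂ ∨ x ∈ P₃ := fun x => by
    have : x ∈ P₁ ∪ P₂ ∪ P₃ := hcover ▸ Set.mem_univ x
    simpa [or_assoc] using this
  have nb : ∀ {P : Set (Fin n → Bool)} (k : Fin n), P.Nonempty →
      AvoidsLayer P k true → AvoidsLayer P k false → False := by
    rintro P k ⟨x, hx⟩ h1 h2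
    have a := h1 x hx
    have b := h2 x hx
    revert a b; cases x k <;> simp
  have ht : ∀ k, OppPair P₁ P₂ k ∨ OppPair P₁ P₃ k ∨ OppPair P₂ P₃ k := by
    intro k
    rcases hlayers k true with h | h | h <;> rcases hlayers k false with h' | h' | h'
    · exact (nb k hne₁ h h').elim
    · exact Or.inl ⟨true, h, h'⟩
    · exact Or.inr (Or.inl ⟨true, h, h'⟩)
    · exact Or.inl ⟨false, h', h⟩
    · exact (nb k hne₂ h h').elim
    · exact Or.inr (Or.inr ⟨true, h, h'⟩)
    · exact Or.inr (Or.inl ⟨false, h', h⟩)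
    · exact Or.inr (Or.inr ⟨false, h', h⟩)
    · exact (nb k hne₃ h h').elim
  have s : ∀ {P Q : Set (Fin n → Bool)} {k : Fin n}, OppPair P Q k → OppPair Q P k := opp_symm
  have m1 : ∀ k l, k ≠ l → OppPair P₁ P₂ k → OppPair P₁ P₃ l → False :=
    fun k l hkl a b => no_mix (by omega) hc ht hkl a b
  have m2 : ∀ k l, k ≠ l → OppPair P₁ P₂ k → OppPair P₂ P₃ l → False :=
    fun k l hkl a b => no_mix (P := P₂) (Q := P₁) (R := P₃) (by omega)
      (fun x => by have := hc x; tauto)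
      (fun k => by have := ht k; have := @s P₁ P₂ k; tauto) hkl (s a) b
  have m3 : ∀ k l, k ≠ l → OppPair P₁ P₃ k → OppPair P₂ P₃ l → False :=
    fun k l hkl a b => no_mix (P := P₃) (Q := P₁) (R := P₂) (by omega)
      (fun x => by have := hc x; tauto)
      (fun k => by
        have := ht k; have := @s P₁ P₃ k; have := @s P₂ P₃ k; tauto) hkl (s a) (s b)
  let z : Fin n := ⟨0, by omega⟩
  rcases ht z with h | h | h
  · obtain ⟨α, e1, e2, e3⟩ := final_form hne₁ hne₂ hc hd₁₃ hd₂₃ (fun k => by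
      by_cases hk : z = k
      · exact hk ▸ h
      · have := ht k; have := m1 z k hk h; have := m2 z k hk h; tauto)
    exact ⟨α, by rw [← e3, ← e1, ← e2]⟩
  · obtain ⟨α, e1, e2, e3⟩ := final_form (R := P₂) hne₁ hne₃ (fun x => by have := hc x; tauto)
      hd₁₂ hd₂₃.symm (fun k => by
      by_cases hk : z = k
      · exact hk ▸ h
      · have := ht k; have := fun a => m1 k z (Ne.symm hk) a h; have := m3 z k hk h; tauto)
    exact ⟨α, by rw [← e3, ← e1, ← e2, Set.pair_comm P₃ P₂]⟩
  · obtain ⟨α, e1, e2, e3⟩ := final_form (R := P₁) hne₂ hne₃ (fun x => by have := hc x; tauto)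
      hd₁₂.symm hd₁₃.symm (fun k => by
      by_cases hk : z = k
      · exact hk ▸ h
      · have := ht k; have := fun a => m2 k z (Ne.symm hk) a h
        have := fun a => m3 k z (Ne.symm hk) a h; tauto)
    exact ⟨α, by rw [← e3, ← e1, ← e2, Set.insert_comm P₁, Set.pair_comm P₁]⟩
end

section
/- Let g be an n-quasigroup of order 4, let F(g) be the set of all n-quasigroups f with f(x̄) ≠ g(x̄) for every x̄ ∈ Σ^n, and let W_n be a set of n-quasigroups closed under equivalence, with W*_n its subset of reduced quasigroups. Then |F(g) ∩ W_n| ≤ 3^(n+1)·|W*_n|. -/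
/-- A reduced `n`-quasigroup: `f(0,…,0,a,0,…,0) = a`. -/
def IsReducedQ {n : ℕ} (f : (Fin n → V4) → V4) : Prop :=
  ∀ (i : Fin n) (a : V4), f (Function.update (fun _ => 0) i a) = a

/-- Equivalence of `n`-quasigroups:
`f(x₁,…,xₙ) = τ₀(g(τ₁ x_{σ(1)},…,τₙ x_{σ(n)}))`. -/
def QEquiv {n : ℕ} (f g : (Fin n → V4) → V4) : Prop :=
  ∃ (σ : Equiv.Perm (Fin n)) (τ₀ : Equiv.Perm V4) (τ : Fin n → Equiv.Perm V4),
    ∀ x : Fin n → V4, f x = τ₀ (g fun i => τ i (x (σ i)))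

/-- A set of `n`-quasigroups is closed under equivalence if it contains each
member's whole equivalence class. -/
def ClosedUnderEquiv {n : ℕ} (W : Set ((Fin n → V4) → V4)) : Prop :=
  ∀ f ∈ W, ∀ g : (Fin n → V4) → V4, IsNQuasigroup g → QEquiv f g → g ∈ W

lemma der_card : ∀ b a : Fin 4, a ≠ b →
    (Finset.univ.filter fun s : Equiv.Perm (Fin 4) => s b = a ∧ ∀ x, s x ≠ x).card ≤ 3 := by
  decide +kernel

lemma der_card' (γ : Equiv.Perm (Fin 4)) (a : Fin 4) (h : a ≠ γ 0) :
    (Finset.univ.filter fun s : Equiv.Perm (Fin 4) => s 0 = a ∧ ∀ x, s x ≠ γ x).card ≤ 3 := by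
  refine le_trans ?_ (der_card (γ 0) a h)
  refine Finset.card_le_card_of_injOn (fun s => s * γ⁻¹) ?_ ?_
  · intro s hs
    simp only [Finset.coe_filter, Finset.mem_univ, true_and, Set.mem_ofPred_eq] at hs ⊢
    refine ⟨by simpa using hs.1, fun x => ?_⟩
    have := hs.2 (γ⁻¹ x)
    simpa using this
  · intro s _ t _ hst
    exact mul_right_cancel hst

open Classical in
noncomputable def linePerm {n : ℕ} (f : (Fin n → V4) → V4) (i : Fin n) : Equiv.Perm V4 :=
  if h : Function.Bijective (fun x => f (Function.update (fun _ => 0) i x)) then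
    Equiv.ofBijective _ h else 1

lemma linePerm_apply {n : ℕ} {f : (Fin n → V4) → V4} (hf : IsNQuasigroup f) (i : Fin n)
    (x : V4) : linePerm f i x = f (Function.update (fun _ => 0) i x) := by
  have h : Function.Bijective (fun x => f (Function.update (fun _ => 0) i x)) := by
    rw [Function.bijective_iff_existsUnique]
    exact fun b => hf _ i b
  rw [linePerm, dif_pos h]
  rfl

lemma linePerm_zero {n : ℕ} {f : (Fin n → V4) → V4} (hf : IsNQuasigroup f) (i : Fin n) :
    linePerm f i 0 = f (fun _ => 0) := by
  rw [linePerm_apply hf]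
  congr 1
  exact Function.update_eq_self i (fun _ => (0 : V4))

/-- reducing a function -/
noncomputable def redQ {n : ℕ} (f : (Fin n → V4) → V4) : (Fin n → V4) → V4 :=
  fun y => Equiv.swap (f fun _ => 0) 0
    (f fun i => (linePerm f i).symm (Equiv.swap (f fun _ => 0) 0 (y i)))

lemma redQ_eq {n : ℕ} (f : (Fin n → V4) → V4) (x : Fin n → V4) :
    f x = Equiv.swap (f fun _ => 0) 0
      (redQ f fun i => Equiv.swap (f fun _ => 0) 0 (linePerm f i (x i))) := by
  simp [redQ]

lemma redQ_quasi {n : ℕ} {f : (Fin n → V4) → V4} (hf : IsNQuasigroup f) :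
    IsNQuasigroup (redQ f) := by
  intro a i b
  have key : ∀ x, redQ f (Function.update a i x) = Equiv.swap (f fun _ => 0) 0
      (f (Function.update (fun j => (linePerm f j).symm (Equiv.swap (f fun _ => 0) 0 (a j))) i
        ((linePerm f i).symm (Equiv.swap (f fun _ => 0) 0 x)))) := by
    intro x
    unfold redQ
    congr 2
    funext j
    by_cases h : j = i
    · subst h; simp
    · simp [h]
  obtain ⟨z, hz, hu⟩ := hf
    (fun j => (linePerm f j).symm (Equiv.swap (f fun _ => 0) 0 (a j))) i
    (Equiv.swap (f fun _ => 0) 0 b)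
  refine ⟨Equiv.swap (f fun _ => 0) 0 (linePerm f i z), ?_, ?_⟩
  · simp only [key]
    simp only at hz
    simp [hz]
  · intro y hy
    simp only [key] at hy
    have := hu ((linePerm f i).symm (Equiv.swap (f fun _ => 0) 0 y)) (by
      simp only
      rw [← hy]; simp)
    rw [← this]; simp

lemma redQ_reduced {n : ℕ} {f : (Fin n → V4) → V4} (hf : IsNQuasigroup f) :
    IsReducedQ (redQ f) := by
  intro i a
  have key : (fun j => (linePerm f j).symm (Equiv.swap (f fun _ => 0) 0
      (Function.update (fun _ => (0 : V4)) i a j))) =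
      Function.update (fun _ => 0) i
        ((linePerm f i).symm (Equiv.swap (f fun _ => 0) 0 a)) := by
    funext j
    by_cases h : j = i
    · subst h; simp
    · simp [h, Equiv.symm_apply_eq, linePerm_zero hf]
  unfold redQ
  rw [key, ← linePerm_apply hf]
  simp

lemma redQ_mem {n : ℕ} {W : Set ((Fin n → V4) → V4)} (hW : ∀ f ∈ W, IsNQuasigroup f)
    (hcl : ClosedUnderEquiv W) {f : (Fin n → V4) → V4} (hf : f ∈ W) : redQ f ∈ W := by
  refine hcl f hf _ (redQ_quasi (hW f hf)) ⟨1, Equiv.swap (f fun _ => 0) 0,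
    fun i => (linePerm f i).trans (Equiv.swap (f fun _ => 0) 0), fun x => ?_⟩
  exact redQ_eq f x

/-- Proposition 11: if `g` is an `n`-quasigroup and `W` is a set of
`n`-quasigroups closed under equivalence, then the number of members of `W`
that are compatible with `g` (i.e. differ from `g` everywhere) is at most
`3^(n+1)` times the number of reduced members of `W`. -/
theorem card_compatible_bound (n : ℕ)
    (g : (Fin n → V4) → V4) (hg : IsNQuasigroup g)
    (W : Set ((Fin n → V4) → V4))
    (hW : ∀ f ∈ W, IsNQuasigroup f) (hcl : ClosedUnderEquiv W) :
    Nat.card {f : (Fin n → V4) → V4 //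
        IsNQuasigroup f ∧ (∀ x : Fin n → V4, f x ≠ g x) ∧ f ∈ W} ≤
      3 ^ (n + 1) *
        Nat.card {f : (Fin n → V4) → V4 // f ∈ W ∧ IsReducedQ f} := by
  classical
  let S : Finset (Σ _ : V4, Fin n → Equiv.Perm V4) :=
    (Finset.univ.filter fun a : V4 => a ≠ g fun _ => 0).sigma fun a =>
      Fintype.piFinset fun i => Finset.univ.filter fun s : Equiv.Perm V4 =>
        s 0 = a ∧ ∀ x, s x ≠ linePerm g i x
  have hS : S.card ≤ 3 ^ (n + 1) := by
    rw [Finset.card_sigma]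
    have h3 : (Finset.univ.filter fun a : V4 => a ≠ g fun _ => 0).card = 3 := by
      rw [Finset.filter_ne', Finset.card_erase_of_mem (Finset.mem_univ _)]
      simp
    refine le_trans (Finset.sum_le_card_nsmul _ _ (3 ^ n) ?_) ?_
    · intro a ha
      rw [Fintype.card_piFinset]
      refine le_trans (Finset.prod_le_pow_card _ _ 3 fun i _ => ?_) (by simp)
      refine der_card' _ _ ?_
      rw [linePerm_zero hg]
      exact (Finset.mem_filter.1 ha).2
    · rw [h3, pow_succ, smul_eq_mul, mul_comm]
  rw [Nat.card_eq_fintype_card, Nat.card_eq_fintype_card, Fintype.card_subtype,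
    Fintype.card_subtype]
  refine le_trans ?_ (Nat.mul_le_mul_right _ hS)
  rw [← Finset.card_product]
  refine Finset.card_le_card_of_injOn
    (fun f => (⟨f fun _ => 0, linePerm f⟩, redQ f)) ?_ ?_
  · intro f hf
    obtain ⟨hq, hne, hfW⟩ : IsNQuasigroup f ∧ (∀ x, f x ≠ g x) ∧ f ∈ W := by simpa using hf
    simp only [S, Finset.coe_product, Set.mem_prod, Finset.mem_coe, Finset.mem_sigma,
      Finset.mem_filter, Finset.mem_univ, true_and, Fintype.mem_piFinset]
    refine ⟨⟨hne _, fun i => ⟨linePerm_zero hq i, fun x => ?_⟩⟩, redQ_mem hW hcl hfW,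
      redQ_reduced hq⟩
    rw [linePerm_apply hq, linePerm_apply hg]
    exact hne _
  · intro f _ f' _ h
    simp only [Prod.mk.injEq, Sigma.mk.injEq, heq_eq_eq] at h
    obtain ⟨⟨h0, h1⟩, h2⟩ := h
    funext x
    rw [redQ_eq f x, redQ_eq f' x, h0, h1, h2]
end

section
/- Fix distinct a, b ∈ Σ and let W_{n−1} be a set of (n−1)-quasigroups of order 4 closed under equivalence, with w_{n−1} = |W_{n−1}|. Let U_n be the set of all functions g : Σ^(n−1) × {a,b} → Σ that are partial n-quasigroups and whose two layers g_a and g_b (where g_α(x₁,…,x_{n−1}) = g(x₁,…,x_{n−1},α)) both belong to W_{n−1}. Then |U_n| ≤ 3·w_{n−1}² / 2^(n+1). -/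
/-- A function on the domain `Σ^m × {a,b} ⊆ Σ^(m+1)` that is a partial
`(m+1)`-quasigroup: along every line of `Σ^(m+1)` each value is taken at most
once on the domain. -/
def IsPartialTwoLayerQuasigroup {m : ℕ} (a b : V4)
    (g : (Fin m → V4) → {y : V4 // y = a ∨ y = b} → V4) : Prop :=
  (∀ (v : Fin m → V4) (i : Fin m) (α : {y : V4 // y = a ∨ y = b}) (c : V4)
      (x x' : V4), g (Function.update v i x) α = c →
      g (Function.update v i x') α = c → x = x') ∧
  (∀ (v : Fin m → V4) (c : V4) (α β : {y : V4 // y = a ∨ y = b}),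
      g v α = c → g v β = c → α = β)

open Classical in
/-- Number of isotopies making `f` disjoint from `g`. -/
noncomputable def isoCount {m : ℕ} (f g : (Fin m → V4) → V4) : ℕ :=
  (Finset.univ.filter (fun p : Equiv.Perm V4 × (Fin m → Equiv.Perm V4) =>
    ∀ x, p.1 (f fun i => p.2 i (x i)) ≠ g x)).card

theorem derange_count : ∀ c d : V4, d ≠ c →
    (Finset.univ.filter (fun π : Equiv.Perm V4 => π c = d ∧ ∀ k, π k ≠ k)).card ≤ 3 := by
  decide +kernel

theorem derange_count' (P : Equiv.Perm V4) (c d : V4) (h : d ≠ P c) :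
    (Finset.univ.filter (fun π : Equiv.Perm V4 => π c = d ∧ ∀ k, π k ≠ P k)).card ≤ 3 := by
  have h1 : P.symm d ≠ c := by
    intro h2; apply h; rw [← h2]; simp
  refine le_trans ?_ (derange_count c (P.symm d) h1)
  apply Finset.card_le_card_of_injOn (fun π => π.trans P.symm)
  · intro π hπ
    simp only [Finset.coe_filter, Finset.mem_univ, true_and, Set.mem_ofPred_eq] at hπ ⊢
    refine ⟨by simp [hπ.1], fun k hk => hπ.2 k ?_⟩
    rw [Equiv.trans_apply, Equiv.symm_apply_eq] at hk
    exact hk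
  · intro π _ ρ _ hh
    ext k
    have := congrArg (fun e : Equiv.Perm V4 => P (e k)) hh
    simp at this
    rw [this]

open Classical in
theorem matching_count (A : V4 → V4 → Prop) (P : Equiv.Perm V4) (hP : ∀ c, ¬ A c (P c)) :
    4 * (Finset.univ.filter (fun π : Equiv.Perm V4 => ∀ c, A c (π c))).card ≤
      3 * ∑ c : V4, ∑ d : V4, (if A c d then 1 else 0) := by
  have key : ∀ c : V4, (Finset.univ.filter (fun π : Equiv.Perm V4 => ∀ c, A c (π c))).card ≤
      ∑ d : V4, 3 * (if A c d then 1 else 0) := by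
    intro c
    rw [Finset.card_eq_sum_card_fiberwise (f := fun π : Equiv.Perm V4 => π c)
      (t := Finset.univ) (by intro x _; simp)]
    apply Finset.sum_le_sum
    intro d _
    by_cases h : A c d
    · simp only [h, if_true, mul_one]
      refine le_trans (Finset.card_le_card ?_)
        (derange_count' P c d (by rintro rfl; exact hP c h))
      intro π hπ
      simp only [Finset.mem_filter, Finset.mem_univ, true_and] at hπ ⊢
      refine ⟨hπ.2, fun k hk => hP k ?_⟩
      rw [← hk]; exact hπ.1 k
    · simp only [h, if_false, mul_zero, Nat.le_zero, Finset.card_eq_zero]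
      apply Finset.filter_eq_empty_iff.2
      intro π hπ hc
      simp only [Finset.mem_filter, Finset.mem_univ, true_and] at hπ
      exact h (hc ▸ hπ c)
  have h4 := Finset.sum_le_sum (s := (Finset.univ : Finset V4)) (fun c _ => key c)
  simp only [Finset.sum_const, Finset.card_univ, Fintype.card_fin, smul_eq_mul] at h4
  refine h4.trans (le_of_eq ?_)
  simp only [Finset.mul_sum]

theorem layer_quasi {m : ℕ} {f : (Fin (m+1) → V4) → V4} (hf : IsNQuasigroup f) (d : V4) :
    IsNQuasigroup (fun y : Fin m → V4 => f (Fin.cons d y)) := by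
  intro a i b
  have := hf (Fin.cons d a) i.succ b
  simpa only [← Fin.cons_update] using this

theorem col_bij {m : ℕ} {f : (Fin (m+1) → V4) → V4} (hf : IsNQuasigroup f) (y : Fin m → V4) :
    Function.Bijective (fun d : V4 => f (Fin.cons d y)) := by
  rw [Function.bijective_iff_existsUnique]
  intro b
  have := hf (Fin.cons 0 y) 0 b
  simpa only [Fin.update_cons_zero] using this

theorem zero_perm {m : ℕ} (f g : (Fin (m+1) → V4) → V4)
    (hf : IsNQuasigroup f) (hg : IsNQuasigroup g)
    (p : Equiv.Perm V4 × (Fin m → Equiv.Perm V4)) :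
    ∃ P : Equiv.Perm V4, ∀ c, p.1 (f (Fin.cons (P c) fun i => p.2 i 0)) =
      g (Fin.cons c fun _ => 0) := by
  refine ⟨(Equiv.ofBijective _ (col_bij hg (fun _ => 0))).trans
    ((Equiv.ofBijective _ (col_bij hf (fun i => p.2 i 0))).trans p.1).symm, fun c => ?_⟩
  exact ((Equiv.ofBijective _ (col_bij hf (fun i => p.2 i 0))).trans p.1).apply_symm_apply _

open Classical in
theorem isoCount_sigma {m : ℕ} (f g : (Fin (m+1) → V4) → V4) :
    isoCount f g = ∑ p : Equiv.Perm V4 × (Fin m → Equiv.Perm V4),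
      (Finset.univ.filter (fun π : Equiv.Perm V4 => ∀ c : V4, ∀ y : Fin m → V4,
        p.1 (f (Fin.cons (π c) fun i => p.2 i (y i))) ≠ g (Fin.cons c y))).card := by
    rw [← Finset.card_sigma]
    unfold isoCount
    refine Finset.card_bij' (fun p _ => ⟨(p.1, Fin.tail p.2), p.2 0⟩)
      (fun q _ => (q.1.1, Fin.cons q.2 q.1.2)) ?_ ?_ ?_ ?_
    · intro p hp
      simp only [Finset.mem_sigma, Finset.mem_filter, Finset.mem_univ, true_and] at hp ⊢
      intro c y
      convert hp (Fin.cons c y) using 4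
      rename_i i
      refine Fin.cases ?_ (fun j => ?_) i <;> simp [Fin.tail]
    · intro q hq
      simp only [Finset.mem_sigma, Finset.mem_filter, Finset.mem_univ, true_and] at hq ⊢
      intro x
      convert hq (x 0) (Fin.tail x) using 3
      · congr 1
        funext i
        refine Fin.cases ?_ (fun j => ?_) i <;> simp [Fin.tail]
      · simp
    · intro p _
      simp
    · intro q _
      simp

open Classical in
theorem isoCount_succ {m : ℕ} (f g : (Fin (m+1) → V4) → V4)
    (hf : IsNQuasigroup f) (hg : IsNQuasigroup g) :
    4 * isoCount f g ≤ 3 * ∑ c : V4, ∑ d : V4,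
      isoCount (fun y => f (Fin.cons d y)) (fun y => g (Fin.cons c y)) := by
  have e2 : ∀ c d : V4, isoCount (fun y => f (Fin.cons d y)) (fun y => g (Fin.cons c y)) =
      ∑ p : Equiv.Perm V4 × (Fin m → Equiv.Perm V4),
        if (∀ y : Fin m → V4, p.1 (f (Fin.cons d fun i => p.2 i (y i))) ≠ g (Fin.cons c y))
          then 1 else 0 := by
    intro c d
    rw [isoCount, Finset.card_filter]
  simp only [e2]
  rw [isoCount_sigma f g, Finset.mul_sum]
  have e3 : ∀ F : V4 → V4 → (Equiv.Perm V4 × (Fin m → Equiv.Perm V4)) → ℕ,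
      ∑ c, ∑ d, ∑ p, F c d p = ∑ p, ∑ c, ∑ d, F c d p := by
    intro F
    symm
    rw [Finset.sum_comm]
    exact Finset.sum_congr rfl fun c _ => Finset.sum_comm
  rw [e3, Finset.mul_sum]
  apply Finset.sum_le_sum
  intro p _
  obtain ⟨P, hP⟩ := zero_perm f g hf hg p
  have hm := matching_count (fun c d => ∀ y : Fin m → V4,
    p.1 (f (Fin.cons d fun i => p.2 i (y i))) ≠ g (Fin.cons c y)) P
    (fun c h => h (fun _ => 0) (hP c))
  refine le_trans (le_of_eq ?_) (hm.trans (le_of_eq ?_)) <;> congr!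

theorem isoCount_le : ∀ (m : ℕ) (f g : (Fin m → V4) → V4),
    IsNQuasigroup f → IsNQuasigroup g → isoCount f g * 2 ^ (m+2) ≤ 3 * 24 ^ (m+1)
  | 0, f, g, _, _ => by
    have h : isoCount f g ≤ 18 := by
      have hd : ∀ u v : V4,
          (Finset.univ.filter (fun π : Equiv.Perm V4 => π u ≠ v)).card ≤ 18 := by
        decide +kernel
      refine le_trans ?_ (hd (f 0) (g 0))
      unfold isoCount
      apply Finset.card_le_card_of_injOn (fun p => p.1)
      · intro p hp
        simp only [Finset.coe_filter, Finset.mem_univ, true_and, Set.mem_ofPred_eq] at hp ⊢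
        have := hp 0
        rwa [Subsingleton.elim (fun i => p.2 i ((0 : Fin 0 → V4) i)) 0] at this
      · intro p _ q _ h
        exact Prod.ext h (Subsingleton.elim _ _)
    omega
  | m+1, f, g, hf, hg => by
    have h1 := isoCount_succ f g hf hg
    have h2 : (∑ c : V4, ∑ d : V4,
      isoCount (fun y => f (Fin.cons d y)) (fun y => g (Fin.cons c y))) * 2 ^ (m+2) ≤
        16 * (3 * 24 ^ (m+1)) := by
      rw [Finset.sum_mul]
      simp only [Finset.sum_mul]
      calc _ ≤ ∑ c : V4, ∑ d : V4, 3 * 24 ^ (m+1) :=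
            Finset.sum_le_sum fun c _ => Finset.sum_le_sum fun d _ =>
              isoCount_le m _ _ (layer_quasi hf d) (layer_quasi hg c)
        _ = _ := by simp; ring
    have h3 := Nat.mul_le_mul_right (2 ^ (m+2)) h1
    rw [pow_succ 2 (m+2), pow_succ 24 (m+1)]
    nlinarith

/-- isotope -/
def untwist {m : ℕ} (p : Equiv.Perm V4 × (Fin m → Equiv.Perm V4)) (f : (Fin m → V4) → V4) :
    (Fin m → V4) → V4 := fun x => p.1.symm (f fun i => (p.2 i).symm (x i))

theorem untwist_twist {m : ℕ} (p : Equiv.Perm V4 × (Fin m → Equiv.Perm V4))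
    (f : (Fin m → V4) → V4) (x : Fin m → V4) :
    p.1 (untwist p f fun i => p.2 i (x i)) = f x := by
  simp [untwist]

theorem untwist_quasi {m : ℕ} (p : Equiv.Perm V4 × (Fin m → Equiv.Perm V4))
    (f : (Fin m → V4) → V4) (hf : IsNQuasigroup f) : IsNQuasigroup (untwist p f) := by
  intro a i b
  have hu : ∀ x, untwist p f (Function.update a i x) =
      p.1.symm (f (Function.update (fun j => (p.2 j).symm (a j)) i ((p.2 i).symm x))) := by
    intro x
    unfold untwist
    congr 2
    funext j
    by_cases h : j = i
    · subst h; simp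
    · simp [h]
  obtain ⟨x, hx, hx'⟩ := hf (fun j => (p.2 j).symm (a j)) i (p.1 b)
  refine ⟨p.2 i x, ?_, ?_⟩
  · simp only [hu]; simp [hx]
  · intro z hz
    simp only [hu] at hz
    rw [Equiv.symm_apply_eq] at hz
    have := hx' _ hz
    rw [← this]; simp

open Classical in
theorem pair_bound (m : ℕ) (W : Set ((Fin m → V4) → V4))
    (hW : ∀ f ∈ W, IsNQuasigroup f) (hcl : ClosedUnderEquiv W) :
    (Finset.univ.filter (fun q : W × W => ∀ x, q.1.1 x ≠ q.2.1 x)).card * 2 ^ (m+2) ≤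
      3 * (Nat.card W) ^ 2 := by
  set D := (Finset.univ.filter (fun q : W × W => ∀ x, q.1.1 x ≠ q.2.1 x)).card with hD
  have hmem : ∀ (p : Equiv.Perm V4 × (Fin m → Equiv.Perm V4)) (f : W), untwist p f.1 ∈ W := by
    intro p f
    refine hcl f.1 f.2 _ (untwist_quasi p _ (hW _ f.2)) ⟨1, p.1, p.2, fun x => ?_⟩
    exact (untwist_twist p f.1 x).symm
  have hle : ∀ p : Equiv.Perm V4 × (Fin m → Equiv.Perm V4), D ≤
      (Finset.univ.filter (fun q : W × W =>
        ∀ x, p.1 (q.1.1 fun i => p.2 i (x i)) ≠ q.2.1 x)).card := by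
    intro p
    apply Finset.card_le_card_of_injOn
      (fun q : W × W => ((⟨untwist p q.1.1, hmem p q.1⟩ : W), q.2))
    · intro q hq
      simp only [Finset.coe_filter, Finset.mem_univ, true_and, Set.mem_ofPred_eq] at hq ⊢
      intro x
      rw [untwist_twist]
      exact hq x
    · intro q _ r _ h
      simp only [Prod.mk.injEq, Subtype.mk.injEq] at h
      refine Prod.ext (Subtype.ext (funext fun x => ?_)) h.2
      rw [← untwist_twist p q.1.1 x, h.1, untwist_twist]
  have hsum : 24 ^ (m+1) * D ≤ ∑ q : W × W, isoCount q.1.1 q.2.1 := by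
    have h1 := Finset.sum_le_sum (s := Finset.univ) (fun p _ => hle p)
    have hc : Fintype.card (Equiv.Perm V4 × (Fin m → Equiv.Perm V4)) = 24 ^ (m+1) := by
      simp [Fintype.card_perm, Nat.factorial, pow_succ, mul_comm]
    rw [Finset.sum_const, Finset.card_univ, hc, smul_eq_mul] at h1
    refine h1.trans (le_of_eq ?_)
    simp only [isoCount, Finset.card_filter]
    exact Finset.sum_comm
  have hb : (∑ q : W × W, isoCount q.1.1 q.2.1) * 2 ^ (m+2) ≤
      (Nat.card W) ^ 2 * (3 * 24 ^ (m+1)) := by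
    rw [Finset.sum_mul]
    calc _ ≤ ∑ q : W × W, 3 * 24 ^ (m+1) := Finset.sum_le_sum fun q _ =>
            isoCount_le m _ _ (hW _ q.1.2) (hW _ q.2.2)
      _ = _ := by
        rw [Finset.sum_const, Finset.card_univ, Fintype.card_prod, Nat.card_eq_fintype_card,
          smul_eq_mul]
        ring
  have h3 := (Nat.mul_le_mul_right (2 ^ (m+2)) hsum).trans hb
  have hpos : 0 < 24 ^ (m+1) := by positivity
  refine Nat.le_of_mul_le_mul_left ?_ hpos
  calc _ = 24 ^ (m+1) * D * 2 ^ (m+2) := by ring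
    _ ≤ _ := h3
    _ = _ := by ring

/-- Corollary 2: with `n = m + 1`, fix distinct `a, b ∈ Σ` and a set `W` of
`m`-quasigroups closed under equivalence.  The number of partial
`n`-quasigroups `g : Σ^(n−1) × {a,b} → Σ` whose two layers `g_a, g_b` both
belong to `W` is at most `3·|W|²/2^(n+1)`. -/
theorem card_two_layer_partial_quasigroups (m : ℕ) (a b : V4) (hab : a ≠ b)
    (W : Set ((Fin m → V4) → V4))
    (hW : ∀ f ∈ W, IsNQuasigroup f) (hcl : ClosedUnderEquiv W) :
    (Nat.card {g : (Fin m → V4) → {y : V4 // y = a ∨ y = b} → V4 //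
        IsPartialTwoLayerQuasigroup a b g ∧
        (fun x => g x ⟨a, Or.inl rfl⟩) ∈ W ∧
        (fun x => g x ⟨b, Or.inr rfl⟩) ∈ W} : ℝ) ≤
      3 * (Nat.card W : ℝ) ^ 2 / 2 ^ (m + 2) := by
  classical
  have hb := pair_bound m W hW hcl
  rw [le_div_iff₀ (by positivity)]
  norm_cast
  refine le_trans (Nat.mul_le_mul_right _ ?_) hb
  rw [Nat.card_eq_fintype_card, ← Finset.card_univ]
  apply Finset.card_le_card_of_injOn
    (fun g => ((⟨fun x => g.1 x ⟨a, Or.inl rfl⟩, g.2.2.1⟩ : W),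
      (⟨fun x => g.1 x ⟨b, Or.inr rfl⟩, g.2.2.2⟩ : W)))
  · intro g _
    simp only [Finset.coe_filter, Finset.mem_univ, true_and, Set.mem_ofPred_eq]
    intro x h
    have := g.2.1.2 x _ _ _ h rfl
    exact hab (congrArg Subtype.val this)
  · intro g _ h _ hgh
    simp only [Prod.mk.injEq, Subtype.mk.injEq] at hgh
    apply Subtype.ext
    funext x y
    obtain ⟨y, rfl | rfl⟩ := y
    · exact congrFun hgh.1 x
    · exact congrFun hgh.2 x
end

section
/- Let r*_n be the number of reduced decomposable n-quasigroups of order 4 and v*_m the number of reduced m-quasigroups of order 4. Then r*_n ≤ Σ_{m=2}^{n−1} C(n,m)·v*_{n−m+1}·v*_m, where C(n,m) is the binomial coefficient. -/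
/-- The number of reduced `k`-quasigroups of order 4. -/
noncomputable def vStar (k : ℕ) : ℕ :=
  Nat.card {f : (Fin k → V4) → V4 // IsNQuasigroup f ∧ IsReducedQ f}

theorem decomp_key {n : ℕ} {f : (Fin n → V4) → V4} (hd : IsDecomposable f) :
    ∃ m, 2 ≤ m ∧ m < n ∧ ∃ S : Finset (Fin n), S.card = m ∧ ∀ x x' : Fin n → V4,
      f (fun i => if i ∈ S then x i else 0) = f (fun i => if i ∈ S then x' i else 0) →
      (∀ i, i ∉ S → x i = x' i) → f x = f x' := by
  obtain ⟨m, h2, hm, h, g, σ, hh, -, hf⟩ := hd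
  refine ⟨m, h2, hm, Finset.univ.map ((Fin.castLEEmb hm.le).trans σ.toEmbedding), by simp, ?_⟩
  have hin : ∀ j : Fin m, σ ⟨j.1, j.2.trans hm⟩ ∈
      Finset.univ.map ((Fin.castLEEmb hm.le).trans σ.toEmbedding) := by
    intro j
    simp only [Finset.mem_map, Finset.mem_univ, true_and]
    exact ⟨j, rfl⟩
  have hout : ∀ (k : ℕ) (hk : m + k < n), σ ⟨m + k, hk⟩ ∉
      Finset.univ.map ((Fin.castLEEmb hm.le).trans σ.toEmbedding) := by
    intro k hk
    simp only [Finset.mem_map, Finset.mem_univ, true_and]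
    rintro ⟨j, hj⟩
    have h1 := congrArg Fin.val (σ.injective hj)
    have h3 := j.2
    simp at h1
    omega
  generalize Finset.univ.map ((Fin.castLEEmb hm.le).trans σ.toEmbedding) = S at hin hout
  intro x x' h1 h3
  rw [hf, hf] at h1
  simp only [hin, hout, if_true, if_false] at h1
  have key : ∀ c : V4, (Fin.cons c (fun _ => 0) : Fin (n - m + 1) → V4) =
      Function.update (fun _ => 0) 0 c := by
    intro c
    funext i
    refine Fin.cases ?_ (fun j => ?_) i <;> simp
  rw [key, key] at h1
  have h4 := (hh (fun _ => 0) 0 _).unique h1 rfl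
  rw [hf, hf, h4]
  congr 2
  funext j
  exact h3 _ (hout _ _)

theorem upd_equiv {α β : Type*} [DecidableEq α] [DecidableEq β] (e : α ≃ β) (w : α → V4)
    (i : α) (a : V4) : (fun b => Function.update w i a (e.symm b)) =
      Function.update (fun b => w (e.symm b)) (e i) a := by
  funext b
  by_cases h : b = e i
  · subst h; simp
  · rw [Function.update_of_ne h, Function.update_of_ne]
    rintro rfl
    simp at h

theorem restrict_good {n k : ℕ} {α : Type*} [DecidableEq α] (e : α ≃ Fin n)
    {f : (Fin n → V4) → V4} (hq : IsNQuasigroup f) (hr : IsReducedQ f)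
    (E : (Fin k → V4) → α → V4) (p : Fin k → α)
    (h0 : E (fun _ => 0) = fun _ => 0)
    (hE : ∀ y i a, E (Function.update y i a) = Function.update (E y) (p i) a) :
    IsNQuasigroup (fun y => f (fun b => E y (e.symm b))) ∧
      IsReducedQ (fun y => f (fun b => E y (e.symm b))) := by
  constructor
  · intro a i b
    simp only [hE, upd_equiv]
    exact hq _ _ _
  · intro i a
    simp only [hE, upd_equiv, h0]
    exact hr _ _

noncomputable def spl {n m : ℕ} (S : {S : Finset (Fin n) // S.card = m}) :
    Fin m ⊕ Fin (n - m) ≃ Fin n :=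
  finSumEquivOfFinset S.2 (by rw [Finset.card_compl, S.2, Fintype.card_fin])

abbrev RedQ (k : ℕ) := {f : (Fin k → V4) → V4 // IsNQuasigroup f ∧ IsReducedQ f}

abbrev Tri (n : ℕ) := Σ m : Finset.Icc 2 (n - 1),
  ({S : Finset (Fin n) // S.card = m.1} × RedQ (n - m.1 + 1)) × RedQ m.1

noncomputable def comp {n : ℕ} (t : Tri n) (x : Fin n → V4) : V4 :=
  t.2.1.2.1 (Fin.cons (t.2.2.1 fun j => x (spl t.2.1.1 (Sum.inl j)))
    (fun j => x (spl t.2.1.1 (Sum.inr j))))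

def E1 {m k : ℕ} (y : Fin m → V4) : Fin m ⊕ Fin k → V4 := Sum.elim y (fun _ => 0)

def E2 {m k : ℕ} (z : Fin m) (y : Fin (k + 1) → V4) : Fin m ⊕ Fin k → V4 :=
  Sum.elim (Function.update (fun _ => 0) z (y 0)) (fun j => y j.succ)

theorem E1_upd {m k : ℕ} (y : Fin m → V4) (i : Fin m) (a : V4) :
    (E1 (Function.update y i a) : Fin m ⊕ Fin k → V4) =
      Function.update (E1 y) (Sum.inl i) a := by
  exact Sum.update_elim_inl.symm

theorem E2_zero {m k : ℕ} (z : Fin m) :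
    (E2 z (fun _ => 0) : Fin m ⊕ Fin k → V4) = fun _ => 0 := by
  funext b
  rcases b with b | b
  · change Function.update (fun _ => (0 : V4)) z 0 b = 0
    rw [Function.update_apply]
    split <;> rfl
  · rfl

theorem E2_upd {m k : ℕ} (z : Fin m) (y : Fin (k + 1) → V4) (i : Fin (k + 1)) (a : V4) :
    (E2 z (Function.update y i a) : Fin m ⊕ Fin k → V4) =
      Function.update (E2 z y)
        ((Fin.cons (Sum.inl z) Sum.inr : Fin (k + 1) → Fin m ⊕ Fin k) i) a := by
  funext b
  refine Fin.cases ?_ (fun j => ?_) i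
  · rcases b with b | b
    · simp only [E2, Sum.elim_inl, Function.update_apply, Fin.cons_zero, Sum.inl.injEq]
      split <;> simp
    · simp [-Sum.elim_update_left, -Sum.update_elim_inl, E2, Function.update_apply, Fin.succ_ne_zero]
  · rcases b with b | b
    · simp [-Sum.elim_update_left, -Sum.update_elim_inl, E2, Function.update_apply, (Fin.succ_ne_zero _).symm]
    · simp [-Sum.elim_update_left, -Sum.update_elim_inl, E2, Function.update_apply]

theorem exists_tri {n : ℕ} {f : (Fin n → V4) → V4} (hq : IsNQuasigroup f)
    (hd : IsDecomposable f) (hr : IsReducedQ f) : ∃ t : Tri n, comp t = f := by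
  obtain ⟨m, h2, hm, S, hS, hkey⟩ := decomp_key hd
  let e := spl ⟨S, hS⟩
  have hmem : ∀ i, i ∈ S ↔ ∃ j, i = e (Sum.inl j) := by
    intro i
    constructor
    · intro hi
      rcases h : e.symm i with j | j
      · exact ⟨j, by rw [← h]; simp⟩
      · exfalso
        have h5 : i = e (Sum.inr j) := by rw [← h]; simp
        have h6 : e (Sum.inr j) ∈ Sᶜ := by
          simp only [e, spl, finSumEquivOfFinset_inr]
          exact Finset.orderEmbOfFin_mem _ _ _
        rw [h5] at hi
        exact (Finset.mem_compl.1 h6) hi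
    · rintro ⟨j, rfl⟩
      simp only [e, spl, finSumEquivOfFinset_inl]
      exact Finset.orderEmbOfFin_mem _ _ _
  let z : Fin m := ⟨0, by omega⟩
  have g1 := restrict_good e hq hr E1 Sum.inl
    (by funext b; rcases b with b | b <;> rfl) E1_upd
  have g2 := restrict_good e hq hr (E2 z) (Fin.cons (Sum.inl z) Sum.inr)
    (E2_zero z) (E2_upd z)
  refine ⟨⟨⟨m, by rw [Finset.mem_Icc]; omega⟩, (⟨S, hS⟩, ⟨_, g2⟩), ⟨_, g1⟩⟩, ?_⟩
  funext x
  simp only [comp]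
  apply hkey
  · set c := f (fun b => E1 (fun j => x (spl ⟨S, hS⟩ (Sum.inl j))) (e.symm b)) with hc
    have h7 : (fun i => if i ∈ S then x i else 0) =
        (fun b => E1 (fun j => x (spl ⟨S, hS⟩ (Sum.inl j))) (e.symm b)) := by
      funext i
      obtain ⟨b, rfl⟩ := e.surjective i
      rcases b with b | b <;> simp [-Sum.elim_update_left, -Sum.update_elim_inl, hmem, E1, e]
    rw [h7, ← hc]
    refine Eq.trans ?_ (hr (e (Sum.inl z)) c)
    congr 1
    funext i
    obtain ⟨b, rfl⟩ := e.surjective i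
    rcases b with b | b
    · rw [if_pos ((hmem _).2 ⟨b, rfl⟩), e.symm_apply_apply]
      simp only [E2, Sum.elim_inl, Function.update_apply, e.apply_eq_iff_eq, Sum.inl.injEq,
        Fin.cons_zero]
    · rw [if_neg, Function.update_of_ne]
      · simp
      · rw [hmem]; simp
  · intro i hi
    obtain ⟨b, rfl⟩ := e.surjective i
    rcases b with b | b
    · exact absurd ((hmem _).2 ⟨b, rfl⟩) hi
    · rw [e.symm_apply_apply]
      rfl

/-- Proposition 13: the number of reduced decomposable `n`-quasigroups
satisfies `r*_n ≤ ∑_{m=2}^{n−1} C(n,m)·v*_{n−m+1}·v*_m`. -/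
theorem card_reduced_decomposable_bound (n : ℕ) :
    Nat.card {f : (Fin n → V4) → V4 //
        IsNQuasigroup f ∧ IsDecomposable f ∧ IsReducedQ f} ≤
      ∑ m ∈ Finset.Icc 2 (n - 1),
        n.choose m * vStar (n - m + 1) * vStar m := by
  choose t ht using fun f : {f : (Fin n → V4) → V4 //
    IsNQuasigroup f ∧ IsDecomposable f ∧ IsReducedQ f} => exists_tri f.2.1 f.2.2.1 f.2.2.2
  have hinj : Function.Injective t := by
    intro a b h
    apply Subtype.ext
    rw [← ht a, ← ht b, h]
  refine (Nat.card_le_card_of_injective t hinj).trans (le_of_eq ?_)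
  rw [Nat.card_sigma, ← Finset.sum_coe_sort (Finset.Icc 2 (n - 1))]
  refine Finset.sum_congr rfl fun m _ => ?_
  rw [Nat.card_prod, Nat.card_prod, Nat.card_eq_fintype_card, Fintype.card_finset_len,
    Fintype.card_fin]
  rfl
end

section
/- For every n ≥ 1 there is exactly one reduced linear n-quasigroup of order 4. -/
/-- A linear `n`-quasigroup: `S_{a,b}(f)` is a linear double-code for all
`a ≠ b`. -/
def IsLinearQ {n : ℕ} (f : (Fin n → V4) → V4) : Prop :=
  ∀ a b : V4, a ≠ b → IsLinearDoubleCode (SCode f a b)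

def LL (c v : V4) : ZMod 2 := if v = 0 ∨ v = c then 0 else 1

def gg (p q : ZMod 2) : V4 := if p = 0 then (if q = 0 then 0 else 1) else (if q = 0 then 2 else 3)

def ff {n : ℕ} (x : Fin n → V4) : V4 := gg (∑ i, LL 1 (x i)) (∑ i, LL 2 (x i))

theorem LL_sep : ∀ u v : V4, LL 1 u = LL 1 v → LL 2 u = LL 2 v → u = v := by decide

theorem LL_three : ∀ v : V4, LL 3 v = LL 1 v + LL 2 v := by decide

theorem LL_gg1 : ∀ p q, LL 1 (gg p q) = p := by decide

theorem LL_gg2 : ∀ p q, LL 2 (gg p q) = q := by decide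

theorem LL_ff {n : ℕ} (x : Fin n → V4) (c : V4) (hc : c ≠ 0) :
    LL c (ff x) = ∑ i, LL c (x i) := by
  have h1 : LL 1 (ff x) = ∑ i, LL 1 (x i) := LL_gg1 _ _
  have h2 : LL 2 (ff x) = ∑ i, LL 2 (x i) := LL_gg2 _ _
  have h3 : LL 3 (ff x) = ∑ i, LL 3 (x i) := by
    simp only [LL_three, Finset.sum_add_distrib, h1, h2]
  fin_cases c
  · exact absurd rfl hc
  · exact h1
  · exact h2
  · exact h3

theorem sum_upd {n : ℕ} (F : Fin n → V4 → ZMod 2) (a : Fin n → V4) (i : Fin n) (x : V4) :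
    ∑ j, F j (Function.update a i x j) = F i x + ∑ j ∈ Finset.univ.erase i, F j (a j) := by
  rw [← Finset.add_sum_erase _ _ (Finset.mem_univ i)]
  simp only [Function.update_self]
  congr 1
  apply Finset.sum_congr rfl
  intro j hj
  rw [Function.update_of_ne (Finset.ne_of_mem_erase hj)]

theorem ff_quasi {n : ℕ} : IsNQuasigroup (ff (n := n)) := by
  intro a i b
  have key : ∀ (p q : ZMod 2) (b : V4), ∃! x, gg (LL 1 x + p) (LL 2 x + q) = b := by
    unfold ExistsUnique; decide
  have h := key (∑ j ∈ Finset.univ.erase i, LL 1 (a j)) (∑ j ∈ Finset.univ.erase i, LL 2 (a j)) b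
  have e : ∀ x, ff (Function.update a i x) = gg (LL 1 x + ∑ j ∈ Finset.univ.erase i, LL 1 (a j))
      (LL 2 x + ∑ j ∈ Finset.univ.erase i, LL 2 (a j)) := by
    intro x
    unfold ff
    rw [sum_upd (fun _ => LL 1), sum_upd (fun _ => LL 2)]
  simpa only [e] using h

theorem LL_zero (c : V4) : LL c 0 = 0 := by simp [LL]

theorem ff_red {n : ℕ} : IsReducedQ (ff (n := n)) := by
  intro i a
  unfold ff
  rw [sum_upd (fun _ => LL 1), sum_upd (fun _ => LL 2)]
  simp only [LL_zero, Finset.sum_const_zero, add_zero]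
  revert a; decide

theorem ff_lin {n : ℕ} (hn : 1 ≤ n) : IsLinearQ (ff (n := n)) := by
  intro a b hab
  have key : ∀ a b : V4, a ≠ b → ∃ c : V4, c ≠ 0 ∧ ∃ e : ZMod 2, ∀ v,
      (v = a ∨ v = b) ↔ LL c v + e = 1 := by decide
  obtain ⟨c, hc, e, h⟩ := key a b hab
  have key2 : ∀ c : V4, c ≠ 0 → ∀ e : ZMod 2, ∃ T : Finset V4, T.card = 2 ∧
      ∀ v, (if v ∈ T then (1 : ZMod 2) else 0) = LL c v + e := by decide
  choose T hT hT2 using key2 c hc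
  let i0 : Fin n := ⟨0, hn⟩
  refine ⟨fun i => T (if i = i0 then e else 0), fun i => hT _, fun x => ?_⟩
  simp only [SCode, Set.mem_ofPred_eq, h, LL_ff x c hc, hT2, Finset.sum_add_distrib,
    Finset.sum_ite_eq', Finset.mem_univ, if_true]

theorem lin_LL {n : ℕ} (f : (Fin n → V4) → V4) (hn : 1 ≤ n) (hl : IsLinearQ f)
    (hr : IsReducedQ f) (c : V4) (hc : c ≠ 0) (x : Fin n → V4) :
    LL c (f x) = ∑ i, LL c (x i) := by
  obtain ⟨T, -, hT⟩ := hl 0 c hc.symm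
  let F : Fin n → V4 → ZMod 2 := fun i v => if v ∈ T i then 1 else 0
  have z : ∀ p q : ZMod 2, (p = 0 ↔ q = 1) → p = 1 + q := by decide
  have hF : ∀ x, LL c (f x) = 1 + ∑ i, F i (x i) := by
    intro x
    apply z
    rw [← hT x]
    simp [SCode, LL]
    tauto
  have h0 : (0 : ZMod 2) = 1 + ∑ i, F i 0 := by
    have := hF (fun _ => 0)
    have e := hr ⟨0, hn⟩ 0
    have e2 : Function.update (fun _ : Fin n => (0 : V4)) ⟨0, hn⟩ 0 = fun _ => 0 :=
      Function.update_eq_self _ _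
    rw [e2] at e
    rwa [e, LL_zero] at this
  have h1 : ∀ i v, F i v = LL c v + F i 0 := by
    intro i v
    have := hF (Function.update (fun _ => 0) i v)
    rw [hr, sum_upd] at this
    rw [← Finset.add_sum_erase _ _ (Finset.mem_univ i)] at h0
    have y : ∀ l p q r : ZMod 2, l = 1 + (p + r) → 0 = 1 + (q + r) → p = l + q := by decide
    exact y _ _ _ _ this h0
  rw [hF x]
  simp only [h1 _ (x _), Finset.sum_add_distrib]
  rw [add_left_comm, ← h0, add_zero]

/-- Proposition 14: for every `n ≥ 1` there is exactly one reduced linear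
`n`-quasigroup of order 4. -/
theorem unique_reduced_linear (n : ℕ) (hn : 1 ≤ n) :
    Nat.card {f : (Fin n → V4) → V4 //
        IsNQuasigroup f ∧ IsLinearQ f ∧ IsReducedQ f} = 1 := by
  rw [Nat.card_eq_one_iff_unique]
  refine ⟨⟨?_⟩, ⟨⟨ff, ff_quasi, ff_lin hn, ff_red⟩⟩⟩
  rintro ⟨f, -, fl, fr⟩ ⟨g, -, gl, gr⟩
  apply Subtype.ext
  funext x
  apply LL_sep
  · rw [lin_LL f hn fl fr 1 (by decide), lin_LL g hn gl gr 1 (by decide)]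
  · rw [lin_LL f hn fl fr 2 (by decide), lin_LL g hn gl gr 2 (by decide)]
end
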